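/- For every integer n ≥ 11, one has |B_n/E_n − 1| ≤ e^{−W(n+1)}/11 and e^{−W(n+1)}/11 ≤ (ln n)/(11·n). -/

import Mathlib

/-- Principal branch of the Lambert W function on `[0, ∞)`: for `x ≥ 0`,
`lambertW x` is the unique `y ≥ 0` with `y * exp y = x`. -/
noncomputable def lambertW (x : ℝ) : ℝ := Function.invFun (fun y : ℝ => y * Real.exp y) x

/-- Bell numbers: `Bell 0 = 1` and `Bell (n+1) = ∑_{k=0}^{n} C(n,k) * Bell k`. -/
def Bell : ℕ → ℕ
  | 0 => 1
  | n + 1 => ∑ k ∈ (Finset.range (n + 1)).attach, (n.choose k.1) * Bell k.1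
decreasing_by exact Finset.mem_range.mp k.2

/-- `E n = n! * exp(e^R - 1) / (R^n * sqrt(2π(n+1)(R+1)))` with `R = W(n+1)`. -/
noncomputable def E (n : ℕ) : ℝ :=
  (Nat.factorial n : ℝ) * Real.exp (Real.exp (lambertW (n + 1)) - 1) /
    ((lambertW (n + 1)) ^ n * Real.sqrt (2 * Real.pi * (n + 1) * (lambertW (n + 1) + 1)))


def force {α : Type} (x : ℕ) (k : ℕ → α) : α := Nat.rec (k 0) (fun m _ => k (m+1)) x

theorem force_eq {α : Type} (x : ℕ) (k : ℕ → α) : force x k = k x := by cases x <;> rfl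

def preSum (l : List ℕ) : ℕ → List ℕ → List ℕ :=
  List.rec (fun acc out => acc :: out) (fun h _ ih acc out => force (acc + h) (fun s => ih s (acc :: out))) l

def revApp (l : List ℕ) : List ℕ → List ℕ :=
  List.rec (fun out => out) (fun h _ ih out => ih (h :: out)) l

def cD : ℕ := 2^36
def cS : ℕ := 2^26
def cQ : ℕ := 2^60
def cT : ℕ := 1024

/-- numerator over `9! * D^9` of the Taylor polynomial of `exp (a/D)`. -/
def tayNum (a : ℕ) : ℕ :=
  362880 * cD^9 + 362880 * a * cD^8 + 181440 * a^2 * cD^7 + 60480 * a^3 * cD^6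
   + 15120 * a^4 * cD^5 + 3024 * a^5 * cD^4 + 504 * a^6 * cD^3 + 72 * a^7 * cD^2 + 9 * a^8 * cD + a^9

def expLo (a : ℕ) : ℕ := tayNum a * cQ / (362880 * cD^9)
def expHi (a : ℕ) : ℕ := (tayNum a * cD * 100 + 11 * a^10) * cQ / (362880 * 100 * cD^10) + 1

theorem cD_eq : cD = cS * cT := by decide +kernel
theorem cD_pos : 0 < cD := by decide +kernel
theorem cS_pos : 0 < cS := by decide +kernel
theorem cQ_pos : 0 < cQ := by decide +kernel

theorem tay_eq (a : ℕ) : (tayNum a : ℝ) / (362880 * (cD:ℝ)^9) = ∑ m ∈ Finset.range 10, ((a:ℝ)/cD)^m / (m.factorial : ℝ) := by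
  have hD : (cD:ℝ) ≠ 0 := by exact_mod_cast cD_pos.ne'
  simp only [Finset.sum_range_succ, Finset.sum_range_zero, Nat.factorial, tayNum]
  push_cast
  field_simp
  ring

theorem exp_split (a : ℕ) : Real.exp ((a:ℝ)/cS) = Real.exp ((a:ℝ)/cD) ^ cT := by
  rw [← Real.exp_nat_mul]
  have hS : (cS:ℝ) ≠ 0 := by exact_mod_cast cS_pos.ne'
  have hT : (cT:ℝ) ≠ 0 := by norm_num [cT]
  congr 1
  rw [cD_eq]; push_cast; field_simp

theorem expLo_spec (a : ℕ) : (expLo a : ℝ) ^ cT ≤ Real.exp ((a:ℝ)/cS) * (cQ:ℝ)^cT := by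
  rw [exp_split, ← mul_pow]
  apply pow_le_pow_left₀ (by positivity)
  have hD : (0:ℝ) < cD := by exact_mod_cast cD_pos
  have h1 : (expLo a : ℝ) ≤ (tayNum a * cQ : ℕ) / ((362880 * cD^9 : ℕ) : ℝ) := Nat.cast_div_le
  refine h1.trans ?_
  push_cast
  rw [mul_comm (tayNum a : ℝ), mul_div_assoc, tay_eq, mul_comm]
  gcongr
  exact Real.sum_le_exp_of_nonneg (by positivity) _

theorem expHi_spec (a : ℕ) (ha : a ≤ cD) : Real.exp ((a:ℝ)/cS) * (cQ:ℝ)^cT ≤ (expHi a : ℝ) ^ cT := by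
  rw [exp_split, ← mul_pow]
  apply pow_le_pow_left₀ (by positivity)
  have hD : (0:ℝ) < cD := by exact_mod_cast cD_pos
  have h0 : (a:ℝ)/cD ≤ 1 := by rw [div_le_one hD]; exact_mod_cast ha
  have h2 := Real.exp_bound' (x := (a:ℝ)/cD) (by positivity) h0 (n := 10) (by norm_num)
  rw [← tay_eq] at h2
  have h1 : (((tayNum a * cD * 100 + 11 * a^10) * cQ : ℕ) : ℝ) / ((362880 * 100 * cD^10 : ℕ) : ℝ) ≤ (expHi a : ℝ) := by
    unfold expHi
    push_cast
    have := Nat.lt_floor_add_one ((((tayNum a * cD * 100 + 11 * a^10) * cQ : ℕ) : ℝ) / ((362880 * 100 * cD^10 : ℕ) : ℝ))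
    rw [Nat.floor_div_eq_div] at this
    push_cast at this
    exact this.le
  refine le_trans ?_ h1
  have e : (((tayNum a * cD * 100 + 11 * a^10) * cQ : ℕ) : ℝ) / ((362880 * 100 * cD^10 : ℕ) : ℝ) = 
     ((tayNum a : ℝ) / (362880 * (cD:ℝ)^9) + ((a:ℝ)/cD)^10 * ((10:ℕ) + 1) / ((Nat.factorial 10 : ℕ) * (10:ℕ))) * cQ := by
    simp only [Nat.factorial]
    push_cast
    field_simp
    ring
  rw [e]
  gcongr

def newt (n p : ℕ) : ℕ := force ((expHi p)^cT * cS / cQ^cT) fun e =>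
  (p^2 * e + (n+1) * cS^3) / (e * (cS + p))

def chkA (n p : ℕ) : Bool :=
  Nat.ble (p * (expHi p)^cT) ((n+1) * cS * cQ^cT)
def chkB (n p : ℕ) : Bool :=
  Nat.ble ((n+1) * cS * cQ^cT) (p * (expLo p)^cT)
def chkC (n f b p : ℕ) : Bool :=
  force (2 * (n+1) * cS^2 / p + 1 - 2 * cS) fun a => force (expHi a) fun u =>
  and (Nat.ble a cD)
  (Nat.ble (f^2 * u^cT * (11 * (n+1) * cS - p)^2 * cS^(2*n) * cS * 1000000)
    (b^2 * p^(2*n) * (2 * 3141592) * (n+1) * (p + cS) * cQ^cT * (11*(n+1)*cS)^2))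
def chkD (n f b p p2 : ℕ) : Bool :=
  force (2 * (n+1) * cS^2 / p2 - 2 * cS) fun a => force (expLo a) fun u =>
  Nat.ble (b^2 * p2^(2*n) * (2 * 3141593) * (n+1) * (p2 + cS) * cQ^cT * (11*(n+1)*cS)^2)
   (f^2 * u^cT * (11 * (n+1) * cS + p)^2 * cS^(2*n) * cS * 1000000)
def chk (n f b p p2 : ℕ) : Bool :=
  and (and (Nat.ble cS p) (Nat.ble p2 (8 * cS))) (and (and (chkA n p) (chkB n p2)) (and (chkC n f b p) (chkD n f b p p2)))

def rowStep (h : ℕ) (r : List ℕ) : List ℕ := preSum (revApp r []) h []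

def loop (fuel : ℕ) : ℕ → ℕ → ℕ → List ℕ → Bool :=
  Nat.rec (fun _ _ _ _ => true) (fun _ ih n f p r =>
     List.rec true (fun h _ _ =>
       force (newt n p) fun p => force (newt n p) fun p => force (newt n p) fun p =>
       force (p-1) fun p1 => force (p+2) fun p2 =>
       cond (chk n f h p1 p2)
       (force (n+1) fun n1 => force (f * n1) fun f1 => ih n1 f1 p (rowStep h r)) false) r) fuel

def row11 : List ℕ := Nat.rec [1] (fun _ r => List.rec [] (fun h t _ => rowStep h (h :: t)) r) 10

theorem loop_check : loop 731 11 39916800 125013000 row11 = true := by decide +kernel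


theorem Bell_succ (n : ℕ) : Bell (n+1) = ∑ k ∈ Finset.range (n+1), n.choose k * Bell k := by
  rw [Bell]
  exact Finset.sum_attach (Finset.range (n+1)) (fun k => n.choose k * Bell k)

def ent (m k : ℕ) : ℕ := ∑ j ∈ Finset.range (k+1), k.choose j * Bell (m+j)

theorem ent_zero_right (m : ℕ) : ent m 0 = Bell m := by simp [ent]
theorem ent_zero_left (k : ℕ) : ent 0 k = Bell (k+1) := by simp [ent, Bell_succ]

theorem ent_succ (m k : ℕ) : ent m (k+1) = ent (m+1) k + ent m k := by
  unfold ent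
  rw [Finset.sum_range_succ']
  simp only [Nat.choose_succ_succ, add_mul, Finset.sum_add_distrib]
  rw [Finset.sum_range_succ (fun x => k.choose (x+1) * _)]
  rw [Finset.sum_range_succ' (fun x => k.choose x * Bell (m+x)) k]
  simp [Nat.choose_succ_self]
  have h2 : ∑ x ∈ Finset.range (k+1), k.choose x * Bell (m + (x+1)) =
      ∑ x ∈ Finset.range (k+1), k.choose x * Bell (m + 1 + x) :=
    Finset.sum_congr rfl fun x _ => by rw [add_assoc m 1 x, add_comm 1 x]
  rw [h2]
  ring

def diagL : ℕ → ℕ → List ℕ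
  | 0, _ => []
  | m+1, k => ent m k :: diagL m (k+1)

theorem preSum_cons (h : ℕ) (t : List ℕ) (acc : ℕ) (out : List ℕ) :
    preSum (h :: t) acc out = preSum t (acc + h) (acc :: out) := by
  show force (acc + h) (fun s => preSum t s (acc :: out)) = _
  rw [force_eq]

theorem revApp_eq (l out : List ℕ) : revApp l out = l.reverse ++ out := by
  induction l generalizing out with
  | nil => rfl
  | cons h t ih => 
    show revApp t (h :: out) = _
    rw [ih]; simp

theorem preSum_diag (m k : ℕ) (out : List ℕ) :
    preSum (diagL m k) (ent m k) out = (diagL (m+1) k).reverse ++ out := by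
  induction m generalizing k out with
  | zero => rfl
  | succ m ih =>
    rw [diagL, preSum_cons, ← ent_succ, ih]
    conv_rhs => rw [diagL]
    simp

theorem diagL_rev (m k : ℕ) : ∃ t, (diagL (m+1) k).reverse = ent 0 (k+m) :: t := by
  induction m generalizing k with
  | zero => exact ⟨[], rfl⟩
  | succ m ih =>
    obtain ⟨t, ht⟩ := ih (k+1)
    rw [diagL, List.reverse_cons, ht]
    exact ⟨t ++ [ent (m+1) k], by simp; congr 1; ring⟩

theorem rowStep_diag (n : ℕ) : rowStep (Bell n) (diagL n 0).reverse = (diagL (n+1) 0).reverse := by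
  unfold rowStep
  rw [revApp_eq, List.reverse_reverse, List.append_nil, ← ent_zero_right, preSum_diag, List.append_nil]

theorem loop_spec (fuel : ℕ) : ∀ n p, 1 ≤ n → loop fuel n n.factorial p (diagL n 0).reverse = true →
    ∀ j < fuel, ∃ p p2, chk (n+j) (n+j).factorial (Bell (n+j)) p p2 = true := by
  induction fuel with
  | zero => intro n p _ _ j hj; omega
  | succ fuel ih =>
    intro n p hn h j hj
    obtain ⟨m, rfl⟩ : ∃ m, n = m + 1 := ⟨n-1, by omega⟩
    obtain ⟨t, ht⟩ := diagL_rev m 0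
    rw [zero_add, ent_zero_left] at ht
    rw [ht] at h
    replace h : (force (newt (m+1) p) fun p => force (newt (m+1) p) fun p => force (newt (m+1) p) fun p =>
       force (p-1) fun p1 => force (p+2) fun p2 =>
       cond (chk (m+1) (m+1).factorial (Bell (m+1)) p1 p2)
       (force (m+1+1) fun n1 => force ((m+1).factorial * n1) fun f1 => loop fuel n1 f1 p (rowStep (Bell (m+1)) (Bell (m+1) :: t))) false) = true := h
    simp only [force_eq] at h
    rw [Bool.cond_eq_ite] at h
    split_ifs at h with hc
    · rcases j with _ | j
      · exact ⟨_, _, hc⟩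
      · rw [← ht, rowStep_diag, mul_comm, ← Nat.factorial_succ] at h
        obtain ⟨p, p2, hp⟩ := ih _ _ (by omega) h j (by omega)
        have e : m + 1 + (j + 1) = m + 1 + 1 + j := by ring
        rw [e]
        exact ⟨p, p2, hp⟩

theorem row11_eq : row11 = (diagL 11 0).reverse := by
  have key : ∀ k, (Nat.rec [1] (fun _ r => List.rec [] (fun h t _ => rowStep h (h :: t)) r) k : List ℕ)
      = (diagL (k+1) 0).reverse := by
    intro k
    induction k with
    | zero => simp [diagL, ent, Bell]
    | succ k ih =>
      show (List.rec [] (fun h t _ => rowStep h (h :: t)) (Nat.rec [1] (fun _ r => List.rec [] (fun h t _ => rowStep h (h :: t)) r) k : List ℕ) : List ℕ) = _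
      rw [ih]
      obtain ⟨t, ht⟩ := diagL_rev k 0
      rw [zero_add, ent_zero_left] at ht
      rw [ht]
      show rowStep (Bell (k+1)) (Bell (k+1) :: t) = _
      rw [← ht, rowStep_diag]
  exact key 10

theorem chk_all (n : ℕ) (h1 : 11 ≤ n) (h2 : n ≤ 741) :
    ∃ p p2, chk n n.factorial (Bell n) p p2 = true := by
  have hf : (39916800 : ℕ) = Nat.factorial 11 := by decide +kernel
  have h := loop_check
  rw [hf, row11_eq] at h
  obtain ⟨j, rfl⟩ := Nat.exists_eq_add_of_le h1
  exact loop_spec 731 11 _ (by norm_num) h j (by omega)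


attribute [irreducible] cS cD cQ cT

theorem xexp_lt {a b : ℝ} (ha : 0 ≤ a) (hab : a < b) : a * Real.exp a < b * Real.exp b := by
  have h1 : Real.exp a < Real.exp b := Real.exp_lt_exp.mpr hab
  have := Real.exp_pos a
  nlinarith

theorem le_of_xexp {a b : ℝ} (hb : 0 ≤ b) (h : a * Real.exp a ≤ b * Real.exp b) : a ≤ b := by
  by_contra hc
  push Not at hc
  exact absurd (xexp_lt hb hc) (not_lt.mpr h)

theorem lambertW_eq {x : ℝ} (hx : 0 < x) : lambertW x * Real.exp (lambertW x) = x := by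
  have hc : Continuous (fun y : ℝ => y * Real.exp y) := by fun_prop
  have : x ∈ Set.Icc ((fun y : ℝ => y * Real.exp y) 0) ((fun y : ℝ => y * Real.exp y) x) := by
    constructor
    · simp; exact hx.le
    · have : 1 ≤ Real.exp x := Real.one_le_exp hx.le
      show x ≤ x * Real.exp x
      nlinarith
  obtain ⟨y, _, hy⟩ := intermediate_value_Icc hx.le hc.continuousOn this
  exact Function.invFun_eq (f := fun y : ℝ => y * Real.exp y) ⟨y, hy⟩

theorem lambertW_pos {x : ℝ} (hx : 0 < x) : 0 < lambertW x := by
  have h := lambertW_eq hx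
  by_contra hc
  push Not at hc
  have := Real.exp_pos (lambertW x)
  nlinarith

/-- final reduction to two multiplicative inequalities -/
theorem abs_of_two {b e η : ℝ} (he : 0 < e) (h1 : e * (1 - η) ≤ b) (h2 : b ≤ e * (1 + η)) :
    |b / e - 1| ≤ η := by
  rw [abs_le]
  constructor
  · have : 1 - η ≤ b / e := by rw [le_div_iff₀ he]; linarith
    linarith
  · have : b / e ≤ 1 + η := by rw [div_le_iff₀ he]; linarith
    linarith

noncomputable def Den (n : ℕ) (r : ℝ) : ℝ := r ^ (2*n) * (2 * Real.pi) * (n+1) * (r+1)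

theorem Den_mono (n : ℕ) {r s : ℝ} (hr : 0 ≤ r) (h : r ≤ s) : Den n r ≤ Den n s := by
  have := Real.pi_pos
  have hs : 0 ≤ s := hr.trans h
  unfold Den; gcongr

theorem E_pos (n : ℕ) : 0 < E n := by
  have hx : (0:ℝ) < n + 1 := by positivity
  have := lambertW_pos hx
  unfold E; positivity

theorem E_sq (n : ℕ) : E n ^ 2 * Den n (lambertW (n+1)) =
    (n.factorial : ℝ)^2 * Real.exp (2 * (n+1) / lambertW (n+1) - 2) := by
  have hx : (0:ℝ) < n + 1 := by positivity
  have hR := lambertW_pos hx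
  have hW := lambertW_eq hx
  unfold E Den
  set R := lambertW (n+1) with hRdef
  have h1 : Real.exp R = (n+1)/R := by field_simp; linarith
  have h2 : Real.exp (2 * (n+1) / R - 2) = Real.exp (Real.exp R - 1) ^ 2 := by
    rw [← Real.exp_nat_mul, h1]; congr 1; push_cast; ring
  rw [h2, div_pow, mul_pow, mul_pow, Real.sq_sqrt (by positivity)]
  have hp := Real.pi_pos
  field_simp
  ring

theorem finite_case (n : ℕ) (h1 : 11 ≤ n) (h2 : n ≤ 741) :
    |(Bell n : ℝ) / E n - 1| ≤ Real.exp (-(lambertW (n + 1))) / 11 := by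
  obtain ⟨p, p2, hc⟩ := chk_all n h1 h2
  simp only [chk, chkA, chkB, chkC, chkD, force_eq, Bool.and_eq_true, Nat.ble_eq] at hc
  obtain ⟨⟨hp1, hp2⟩, ⟨hA, hB⟩, ⟨haC, hC⟩, hD⟩ := hc
  have hx : (0:ℝ) < n + 1 := by positivity
  have hR := lambertW_pos hx
  have hW := lambertW_eq hx
  have hEsq := E_sq n
  have hE := E_pos n
  set R := lambertW (n+1) with hRdef
  have hexp : Real.exp (-R) = R / (n+1) := by
    rw [Real.exp_neg, ← hW]; field_simp
  have hS : (0:ℝ) < cS := by exact_mod_cast cS_pos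
  have hQ : (0:ℝ) < (cQ:ℝ)^cT := by have : (0:ℝ) < cQ := by exact_mod_cast cQ_pos
                                    positivity
  have hS2 : (1:ℝ) ≤ cS := by exact_mod_cast cS_pos
  have h8 : 8 * cS ≤ cD := by decide +kernel
  generalize hQT : cQ^cT = QT at *
  have hQT' : (cQ:ℝ)^cT = (QT:ℝ) := by rw [← hQT]; push_cast; rfl
  rw [hQT'] at hQ
  set r1 : ℝ := p / cS with hr1
  set r2 : ℝ := p2 / cS with hr2
  have hppos : (0:ℝ) < p := lt_of_lt_of_le hS (by exact_mod_cast hp1)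
  have hr1pos : 0 < r1 := by positivity
  have hpe : (p:ℝ) = r1 * cS := by rw [hr1]; field_simp
  have hp2e : (p2:ℝ) = r2 * cS := by rw [hr2]; field_simp
  -- bracketing
  have b2 : R ≤ r2 := by
    apply le_of_xexp (by positivity)
    rw [hW]
    have e1 := expLo_spec p2
    rw [hQT', ← hr2] at e1
    have hB' : ((n:ℝ)+1) * cS * QT ≤ p2 * (expLo p2 : ℝ)^cT := by exact_mod_cast hB
    have : ((n:ℝ)+1) * (cS * QT) ≤ (r2 * Real.exp r2) * (cS * QT) := by
      calc ((n:ℝ)+1) * (cS * QT) = ((n:ℝ)+1) * cS * QT := by ring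
        _ ≤ p2 * (expLo p2 : ℝ)^cT := hB'
        _ ≤ p2 * (Real.exp r2 * QT) := by gcongr
        _ = _ := by rw [hp2e]; ring
    exact le_of_mul_le_mul_right this (by positivity)
  have hr2pos : 0 < r2 := lt_of_lt_of_le hR b2
  have hp2pos : (0:ℝ) < p2 := by rw [hp2e]; positivity
  have r28 : r2 ≤ 8 := by rw [hr2, div_le_iff₀ hS]; exact_mod_cast hp2
  have b1 : r1 ≤ R := by
    by_cases hbig : p ≤ cD
    · apply le_of_xexp hR.le
      rw [hW]
      have e1 := expHi_spec p hbig
      rw [hQT', ← hr1] at e1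
      have hA' : (p:ℝ) * (expHi p : ℝ)^cT ≤ ((n:ℝ)+1) * cS * QT := by exact_mod_cast hA
      have : (r1 * Real.exp r1) * (cS * QT) ≤ ((n:ℝ)+1) * (cS * QT) := by
        calc (r1 * Real.exp r1) * (cS * QT) = p * (Real.exp r1 * QT) := by rw [hpe]; ring
          _ ≤ p * (expHi p : ℝ)^cT := by gcongr
          _ ≤ _ := by linarith
      exact le_of_mul_le_mul_right this (by positivity)
    · exfalso
      push Not at hbig
      have hq : cQ ≤ expHi p := by
        unfold expHi
        have : cQ ≤ (tayNum p * cD * 100 + 11 * p ^ 10) * cQ / (362880 * 100 * cD ^ 10) := by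
          rw [Nat.le_div_iff_mul_le (by have := cD_pos; positivity)]
          rw [mul_comm]
          apply Nat.mul_le_mul_right
          have : 362880 * cD^9 ≤ tayNum p := by unfold tayNum; simp only [add_assoc]; exact Nat.le_add_right _ _
          calc 362880 * 100 * cD^10 = (362880 * cD^9) * cD * 100 := by ring
            _ ≤ tayNum p * cD * 100 := by gcongr
            _ ≤ _ := Nat.le_add_right _ _
        exact this.trans (Nat.le_succ _)
      have hq2 : QT ≤ expHi p ^ cT := by rw [← hQT]; exact Nat.pow_le_pow_left hq _
      have h3 : p * QT ≤ (n+1) * cS * QT := le_trans (Nat.mul_le_mul_left _ hq2) hA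
      have hQn : 0 < QT := by exact_mod_cast hQ
      have h4 := Nat.le_of_mul_le_mul_right h3 hQn
      have h5 : cD = 1024 * cS := by decide +kernel
      have h6 : (n+1) * cS ≤ 742 * cS := Nat.mul_le_mul_right _ (by omega)
      omega
  have hη : r1 / (11 * (n+1)) ≤ Real.exp (-R) / 11 := by
    rw [hexp]
    have e0 : R / ((n:ℝ)+1) / 11 = R / (11 * (n+1)) := by field_simp
    rw [e0]; gcongr
  refine le_trans (abs_of_two hE ?_ ?_) hη
  · -- lower
    set a := 2 * (n+1) * cS^2 / p + 1 - 2 * cS with ha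
    have e1 := expHi_spec a haC
    rw [hQT'] at e1
    have hexpa : Real.exp (2 * (n+1) / r1 - 2) ≤ Real.exp ((a:ℝ)/cS) := by
      apply Real.exp_le_exp.mpr
      rw [le_div_iff₀ hS]
      have h3 : 2 * (n+1) * cS^2 / p + 1 ≤ a + 2 * cS := by omega
      have h4 := Nat.lt_floor_add_one (((2 * (n+1) * cS^2 : ℕ) : ℝ) / ((p : ℕ) : ℝ))
      rw [Nat.floor_div_eq_div] at h4
      have h5 : ((2 * (n+1) * cS^2 / p : ℕ) : ℝ) + 1 ≤ a + 2 * cS := by exact_mod_cast h3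
      have h6 : ((2 * (n+1) * cS^2 : ℕ) : ℝ) / ((p : ℕ) : ℝ) = 2 * (n+1) / r1 * cS := by
        rw [hpe]; push_cast; field_simp
      rw [h6] at h4
      linarith
    have hsub : p ≤ 11 * (n+1) * cS := by
      have : (p:ℝ) ≤ 11 * (n+1) * cS := by
        rw [hpe]
        have : r1 ≤ 11 * (n+1) := by
          have : (0:ℝ) ≤ n := by positivity
          linarith [b1.trans (b2.trans r28)]
        gcongr
      exact_mod_cast this
    have hC' : ((n.factorial:ℝ)^2 * (expHi a : ℝ)^cT * (11 * (n+1) * cS - p)^2 * (cS:ℝ)^(2*n) * cS * 1000000)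
      ≤ ((Bell n : ℝ)^2 * (p:ℝ)^(2*n) * (2 * 3141592) * (n+1) * (p + cS) * QT * (11*(n+1)*cS)^2) := by
      have := (Nat.cast_le (α := ℝ)).mpr hC
      push_cast [Nat.cast_sub hsub] at this
      have e0 : (2 * 3141592 : ℝ) = 6283184 := by norm_num
      rw [e0]
      exact this
    have hpi : (3.141592:ℝ) < Real.pi := Real.pi_gt_d6
    have key : (n.factorial:ℝ)^2 * Real.exp (2 * (n+1) / r1 - 2) * (1 - r1 / (11 * (n+1)))^2 ≤ (Bell n : ℝ)^2 * Den n r1 := by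
      have c1 : (n.factorial:ℝ)^2 * Real.exp (2 * (n+1) / r1 - 2) * (1 - r1 / (11 * (n+1)))^2 * (QT * (cS:ℝ)^(2*n) * cS * 1000000 * (11*(n+1)*cS)^2)
         ≤ (Bell n : ℝ)^2 * Den n r1 * (QT * (cS:ℝ)^(2*n) * cS * 1000000 * (11*(n+1)*cS)^2) := by
        calc _ = ((n.factorial:ℝ)^2 * (Real.exp (2 * (n+1) / r1 - 2) * QT) * (11 * (n+1) * cS - p)^2 * (cS:ℝ)^(2*n) * cS * 1000000) := by
              rw [hpe]; field_simp
          _ ≤ ((n.factorial:ℝ)^2 * (expHi a : ℝ)^cT * (11 * (n+1) * cS - p)^2 * (cS:ℝ)^(2*n) * cS * 1000000) := by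
              gcongr
              refine le_trans ?_ e1
              gcongr
          _ ≤ _ := hC'
          _ ≤ ((Bell n : ℝ)^2 * (p:ℝ)^(2*n) * (2 * Real.pi * 1000000) * (n+1) * (p + cS) * QT * (11*(n+1)*cS)^2) := by
              have hh : (2 * 3141592 : ℝ) ≤ 2 * Real.pi * 1000000 := by linarith
              gcongr (Bell n : ℝ)^2 * (p:ℝ)^(2*n) * ?_ * (n+1) * (p + cS) * QT * (11*(n+1)*cS)^2
          _ = _ := by unfold Den; rw [hpe]; rw [mul_pow]; ring
      exact le_of_mul_le_mul_right c1 (by positivity)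
    apply le_of_sq_le_sq _ (by positivity)
    have hDR : 0 < Den n R := by unfold Den; have := Real.pi_pos; positivity
    apply le_of_mul_le_mul_right _ hDR
    calc (E n * (1 - r1 / (11 * (n+1))))^2 * Den n R = (E n ^2 * Den n R) * (1 - r1 / (11 * (n+1)))^2 := by ring
      _ = _ := by rw [hEsq]
      _ ≤ (n.factorial:ℝ)^2 * Real.exp (2 * (n+1) / r1 - 2) * (1 - r1 / (11 * (n+1)))^2 := by gcongr
      _ ≤ _ := key
      _ ≤ (Bell n : ℝ)^2 * Den n R := by
        gcongr
        exact Den_mono n hr1pos.le b1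
  · set a := 2 * (n+1) * cS^2 / p2 - 2 * cS with ha
    have e1 := expLo_spec a
    rw [hQT'] at e1
    have hpi : Real.pi < (3.141593:ℝ) := Real.pi_lt_d6
    have hnn : 2 * cS ≤ 2 * (n+1) * cS^2 / p2 := by
      rw [Nat.le_div_iff_mul_le (by exact_mod_cast hp2pos)]
      calc 2 * cS * p2 ≤ 2 * cS * (8 * cS) := by gcongr
        _ = 2 * 8 * cS^2 := by ring
        _ ≤ 2 * (n+1) * cS^2 := by gcongr; omega
    have hexpa : Real.exp ((a:ℝ)/cS) ≤ Real.exp (2 * (n+1) / r2 - 2) := by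
      apply Real.exp_le_exp.mpr
      rw [div_le_iff₀ hS, ha, Nat.cast_sub hnn]
      have h4 : ((2 * (n+1) * cS^2 / p2 : ℕ) : ℝ) ≤ ((2 * (n+1) * cS^2 : ℕ) : ℝ) / ((p2 : ℕ) : ℝ) := Nat.cast_div_le
      have h6 : ((2 * (n+1) * cS^2 : ℕ) : ℝ) / ((p2 : ℕ) : ℝ) = 2 * (n+1) / r2 * cS := by
        rw [hp2e]; push_cast; field_simp
      rw [h6] at h4
      push_cast at h4 ⊢
      linarith
    have hD' : ((Bell n : ℝ)^2 * (p2:ℝ)^(2*n) * (2 * 3141593) * (n+1) * (p2 + cS) * QT * (11*(n+1)*cS)^2) ≤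
       ((n.factorial:ℝ)^2 * (expLo a : ℝ)^cT * (11 * (n+1) * cS + p)^2 * (cS:ℝ)^(2*n) * cS * 1000000) := by
      exact_mod_cast hD
    have key : (Bell n : ℝ)^2 * Den n r2 ≤ (n.factorial:ℝ)^2 * Real.exp (2 * (n+1) / r2 - 2) * (1 + r1 / (11 * (n+1)))^2 := by
      have c1 : (Bell n : ℝ)^2 * Den n r2 * (QT * (cS:ℝ)^(2*n) * cS * 1000000 * (11*(n+1)*cS)^2) ≤
         (n.factorial:ℝ)^2 * Real.exp (2 * (n+1) / r2 - 2) * (1 + r1 / (11 * (n+1)))^2 * (QT * (cS:ℝ)^(2*n) * cS * 1000000 * (11*(n+1)*cS)^2) := by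
        calc _ = ((Bell n : ℝ)^2 * (p2:ℝ)^(2*n) * (2 * Real.pi * 1000000) * (n+1) * (p2 + cS) * QT * (11*(n+1)*cS)^2) := by
               unfold Den; rw [hp2e]; rw [mul_pow]; ring
          _ ≤ ((Bell n : ℝ)^2 * (p2:ℝ)^(2*n) * (2 * 3141593) * (n+1) * (p2 + cS) * QT * (11*(n+1)*cS)^2) := by
              have hh : 2 * Real.pi * 1000000 ≤ (2 * 3141593 : ℝ) := by linarith
              gcongr (Bell n : ℝ)^2 * (p2:ℝ)^(2*n) * ?_ * (n+1) * (p2 + cS) * QT * (11*(n+1)*cS)^2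
          _ ≤ _ := hD'
          _ ≤ ((n.factorial:ℝ)^2 * (Real.exp (2 * (n+1) / r2 - 2) * QT) * (11 * (n+1) * cS + p)^2 * (cS:ℝ)^(2*n) * cS * 1000000) := by
              gcongr
              refine le_trans e1 ?_
              gcongr
          _ = _ := by
              rw [hpe]; field_simp
      exact le_of_mul_le_mul_right c1 (by positivity)
    apply le_of_sq_le_sq _ (by positivity)
    have hDR : 0 < Den n R := by unfold Den; have := Real.pi_pos; positivity
    apply le_of_mul_le_mul_right _ hDR
    calc (Bell n : ℝ)^2 * Den n R ≤ (Bell n : ℝ)^2 * Den n r2 := by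
          gcongr
          exact Den_mono n hR.le b2
      _ ≤ _ := key
      _ ≤ (n.factorial:ℝ)^2 * Real.exp (2 * (n+1) / R - 2) * (1 + r1 / (11 * (n+1)))^2 := by gcongr
      _ = (E n ^2 * Den n R) * (1 + r1 / (11 * (n+1)))^2 := by rw [hEsq]
      _ = _ := by ring

theorem second_part (n : ℕ) (hn : 11 ≤ n) :
    Real.exp (-(lambertW (n + 1))) / 11 ≤ Real.log n / (11 * n) := by
  have hx : (0:ℝ) < n + 1 := by positivity
  have hR := lambertW_pos hx
  have hW := lambertW_eq hx
  set R := lambertW (n+1) with hRdef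
  have hn' : (11:ℝ) ≤ n := by exact_mod_cast hn
  have hexp : Real.exp (-R) = R / (n+1) := by
    rw [Real.exp_neg, ← hW]; field_simp
  have hl : 2 ≤ Real.log n := by
    rw [Real.le_log_iff_exp_le (by linarith)]
    have : Real.exp 2 = Real.exp 1 ^ 2 := by rw [← Real.exp_nat_mul]; norm_num
    rw [this]
    have := Real.exp_one_lt_d9
    have := Real.exp_pos 1
    nlinarith
  have hRl : R ≤ Real.log n := by
    apply le_of_xexp (by linarith)
    rw [hW, Real.exp_log (by linarith)]
    nlinarith
  rw [hexp, div_div, div_le_div_iff₀ (by positivity) (by positivity)]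
  nlinarith

theorem iterF (n : ℕ) :
    iteratedDeriv n (fun z : ℂ => Complex.exp (Complex.exp z - 1)) 0 = (Bell n : ℂ) := by
  induction n using Nat.strong_induction_on with
  | _ n ih =>
    cases n with
    | zero => simp [Bell]
    | succ n =>
      rw [iteratedDeriv_succ']
      have hd : deriv (fun z : ℂ => Complex.exp (Complex.exp z - 1))
          = (fun z : ℂ => Complex.exp (Complex.exp z - 1)) * Complex.exp := by
        funext z
        have h1 : HasDerivAt (fun z : ℂ => Complex.exp (Complex.exp z - 1))
            (Complex.exp (Complex.exp z - 1) * Complex.exp z) z :=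
          ((Complex.hasDerivAt_exp z).sub_const 1).cexp
        exact h1.deriv
      rw [hd, iteratedDeriv_mul, Bell_succ]
      · push_cast
        apply Finset.sum_congr rfl
        intro k hk
        rw [ih k (by simpa using hk), iteratedDeriv_eq_iterate, Complex.iter_deriv_exp]
        simp
      · exact ((Complex.contDiff_exp.sub contDiff_const).cexp).contDiffAt
      · exact Complex.contDiff_exp.contDiffAt

theorem bell_integral_c (n : ℕ) {R : ℝ} (hR : 0 < R) :
    ∫ θ in (0:ℝ)..(2 * Real.pi),
      Complex.exp (Complex.exp (R * Complex.exp (θ * Complex.I)) - Real.exp R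
        - n * θ * Complex.I)
      = ((2 * Real.pi * Bell n * R ^ n / (n.factorial * Real.exp (Real.exp R - 1)) : ℝ) : ℂ) := by
  have hd : Differentiable ℂ (fun z : ℂ => Complex.exp (Complex.exp z - 1)) :=
    (Complex.differentiable_exp.sub_const 1).cexp
  have h := DifferentiableOn.circleIntegral_one_div_sub_center_pow_smul (c := 0) hR n
    (hd.differentiableOn)
  rw [iterF, circleIntegral] at h
  have hR' : (R:ℂ) ≠ 0 := by exact_mod_cast hR.ne'
  have e1 : ∀ θ : ℝ, deriv (circleMap 0 R) θ • (1 / (circleMap 0 R θ - 0) ^ (n + 1)) •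
      Complex.exp (Complex.exp (circleMap 0 R θ) - 1)
      = (Complex.I * (1 / R ^ n) * Complex.exp (Real.exp R - 1)) *
        Complex.exp (Complex.exp (R * Complex.exp (θ * Complex.I)) - Real.exp R
        - n * θ * Complex.I) := by
    intro θ
    have hz : circleMap 0 R θ = R * Complex.exp (θ * Complex.I) := by simp [circleMap]
    rw [deriv_circleMap, hz]
    simp only [smul_eq_mul, sub_zero]
    have : Complex.exp (Complex.exp (R * Complex.exp (θ * Complex.I)) - Real.exp R
        - n * θ * Complex.I) = Complex.exp (Complex.exp (R * Complex.exp (θ * Complex.I)) - 1)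
         / (Complex.exp (Real.exp R - 1) * Complex.exp (θ * Complex.I) ^ n) := by
      rw [← Complex.exp_nat_mul, ← Complex.exp_add, ← Complex.exp_sub]
      congr 1
      ring
    rw [this]
    have h2 := Complex.exp_ne_zero (θ * Complex.I)
    have h3 := Complex.exp_ne_zero (Real.exp R - 1)
    field_simp
    ring
  simp_rw [e1] at h
  rw [intervalIntegral.integral_const_mul] at h
  have h3 := Complex.exp_ne_zero (Real.exp R - 1)
  have h4 : (n.factorial : ℂ) ≠ 0 := by exact_mod_cast n.factorial_ne_zero
  have hI := Complex.I_ne_zero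
  have h5 : Complex.exp (Real.exp R - 1) = ((Real.exp (Real.exp R - 1) : ℝ) : ℂ) := by
    push_cast; rfl
  rw [h5] at h h3
  rw [smul_eq_mul] at h
  apply mul_left_cancel₀ (mul_ne_zero (mul_ne_zero hI (one_div_ne_zero (pow_ne_zero n hR'))) h3)
  rw [h]
  push_cast
  push_cast at h3
  field_simp

noncomputable def rePsi (R θ : ℝ) : ℝ := Real.exp (-(R * (1 - Real.cos θ))) * Real.cos (R * Real.sin θ)
noncomputable def imPsi (R θ : ℝ) : ℝ := Real.exp (-(R * (1 - Real.cos θ))) * Real.sin (R * Real.sin θ)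

/-- the integrand -/
noncomputable def FF (n : ℕ) (R θ : ℝ) : ℝ :=
  Real.exp (Real.exp R * (rePsi R θ - 1)) * Real.cos (Real.exp R * imPsi R θ - n * θ)

theorem FF_re (n : ℕ) (R θ : ℝ) : (Complex.exp (Complex.exp (R * Complex.exp (θ * Complex.I))
    - Real.exp R - n * θ * Complex.I)).re = FF n R θ := by
  have e0 : (R * Complex.exp (θ * Complex.I) : ℂ) =
     ((R * Real.cos θ : ℝ) : ℂ) + ((R * Real.sin θ : ℝ) : ℂ) * Complex.I := by
    rw [Complex.exp_mul_I]; push_cast; ring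
  have e1 : (Complex.exp (R * Complex.exp (θ * Complex.I))
    - Real.exp R - n * θ * Complex.I : ℂ) =
     ((Real.exp R * (rePsi R θ - 1) : ℝ) : ℂ) +
     ((Real.exp R * imPsi R θ - n * θ : ℝ) : ℂ) * Complex.I := by
    have h : Real.exp (R * Real.cos θ) = Real.exp R * Real.exp (-(R * (1 - Real.cos θ))) := by
      rw [← Real.exp_add]; congr 1; ring
    rw [e0, Complex.exp_add_mul_I, ← Complex.ofReal_exp, h, rePsi, imPsi]
    push_cast
    ring
  rw [e1, Complex.exp_re]
  simp only [Complex.add_re, Complex.add_im, Complex.re_ofReal_mul, Complex.im_ofReal_mul,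
    Complex.ofReal_re, Complex.ofReal_im, Complex.I_re, Complex.I_im, mul_zero, mul_one,
    add_zero, zero_add, FF]

theorem bell_integral (n : ℕ) {R : ℝ} (hR : 0 < R) :
    ∫ θ in (-Real.pi)..Real.pi, FF n R θ
      = 2 * Real.pi * Bell n * R ^ n / (n.factorial * Real.exp (Real.exp R - 1)) := by
  have h := bell_integral_c n hR
  have hp : Function.Periodic (fun θ : ℝ =>
      Complex.exp (Complex.exp (R * Complex.exp (θ * Complex.I)) - Real.exp R
        - n * θ * Complex.I)) (2 * Real.pi) := by
    intro θ
    have h1 : Complex.exp (((θ + 2 * Real.pi : ℝ) : ℂ) * Complex.I) = Complex.exp (θ * Complex.I) := by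
      push_cast
      rw [add_mul, Complex.exp_periodic]
    have h2 : ∀ A : ℂ, Complex.exp (A - n * ((θ + 2 * Real.pi : ℝ) : ℂ) * Complex.I)
       = Complex.exp (A - n * θ * Complex.I) := by
      intro A
      have := Complex.exp_periodic.sub_nat_mul_eq (x := A - n * θ * Complex.I) n
      rw [← this]
      congr 1
      push_cast
      ring
    simp only
    rw [h1, h2]
  have h6 := hp.intervalIntegral_add_eq 0 (-Real.pi)
  rw [zero_add, h, show -Real.pi + 2 * Real.pi = Real.pi by ring] at h6
  have hi : IntervalIntegrable (fun θ : ℝ =>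
      Complex.exp (Complex.exp (R * Complex.exp (θ * Complex.I)) - Real.exp R
        - n * θ * Complex.I)) MeasureTheory.volume (-Real.pi) Real.pi := by
    apply Continuous.intervalIntegrable
    fun_prop
  have h7 := Complex.reCLM.intervalIntegral_comp_comm hi
  rw [← h6] at h7
  simp only [Complex.reCLM_apply, Complex.ofReal_re] at h7
  rw [← h7]
  congr 1
  funext θ
  rw [FF_re]


theorem nonneg_of_deriv {f f' : ℝ → ℝ} (h0 : f 0 = 0) (hd : ∀ x, HasDerivAt f (f' x) x)
    (hp : ∀ x, 0 ≤ x → 0 ≤ f' x) : ∀ x, 0 ≤ x → 0 ≤ f x := by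
  intro x hx
  have hm : MonotoneOn f (Set.Ici 0) := by
    apply monotoneOn_of_deriv_nonneg (convex_Ici 0)
    · exact fun y _ => (hd y).continuousAt.continuousWithinAt
    · exact fun y _ => (hd y).differentiableAt.differentiableWithinAt
    · intro y hy
      rw [(hd y).deriv]
      exact hp y (by simpa using (interior_subset hy))
  have := hm (Set.mem_Ici.2 le_rfl) (Set.mem_Ici.2 hx) hx
  rwa [h0] at this

theorem tay1 : ∀ x : ℝ, 0 ≤ x → 0 ≤ x - Real.sin x := fun x hx => by
  have := Real.sin_le hx; linarith
theorem tay2 : ∀ x : ℝ, 0 ≤ x → 0 ≤ Real.cos x - 1 + x ^ 2 / 2 := fun x _ => by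
  have := Real.one_sub_sq_div_two_le_cos (x := x); linarith
theorem tay3 : ∀ x : ℝ, 0 ≤ x → 0 ≤ Real.sin x - x + x ^ 3 / 6 := by
  apply nonneg_of_deriv (f' := fun x => Real.cos x - 1 + x ^ 2 / 2) (by simp) _ tay2
  intro x
  refine (((Real.hasDerivAt_sin x).sub (hasDerivAt_id x)).add ((hasDerivAt_pow 3 x).div_const 6)).congr_deriv ?_
  norm_num; ring
theorem tay4 : ∀ x : ℝ, 0 ≤ x → 0 ≤ 1 - x ^ 2 / 2 + x ^ 4 / 24 - Real.cos x := by
  apply nonneg_of_deriv (f' := fun x => Real.sin x - x + x ^ 3 / 6) (by simp) _ tay3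
  intro x
  refine ((((hasDerivAt_const x (1:ℝ)).sub ((hasDerivAt_pow 2 x).div_const 2)).add
    ((hasDerivAt_pow 4 x).div_const 24)).sub (Real.hasDerivAt_cos x)).congr_deriv ?_
  norm_num; ring
theorem tay5 : ∀ x : ℝ, 0 ≤ x → 0 ≤ x - x ^ 3 / 6 + x ^ 5 / 120 - Real.sin x := by
  apply nonneg_of_deriv (f' := fun x => 1 - x ^ 2 / 2 + x ^ 4 / 24 - Real.cos x) (by simp) _ tay4
  intro x
  refine ((((hasDerivAt_id x).sub ((hasDerivAt_pow 3 x).div_const 6)).add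
    ((hasDerivAt_pow 5 x).div_const 120)).sub (Real.hasDerivAt_sin x)).congr_deriv ?_
  norm_num; ring
theorem tay6 : ∀ x : ℝ, 0 ≤ x → 0 ≤ Real.cos x - 1 + x ^ 2 / 2 - x ^ 4 / 24 + x ^ 6 / 720 := by
  apply nonneg_of_deriv (f' := fun x => x - x ^ 3 / 6 + x ^ 5 / 120 - Real.sin x) (by simp) _ tay5
  intro x
  refine (((((Real.hasDerivAt_cos x).sub (hasDerivAt_const x (1:ℝ))).add ((hasDerivAt_pow 2 x).div_const 2)).sub
    ((hasDerivAt_pow 4 x).div_const 24)).add ((hasDerivAt_pow 6 x).div_const 720)).congr_deriv ?_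
  norm_num; ring

theorem cosb4 (x : ℝ) : |Real.cos x - 1 + x ^ 2 / 2| ≤ x ^ 4 / 24 := by
  have h1 := tay2 |x| (abs_nonneg x)
  have h2 := tay4 |x| (abs_nonneg x)
  simp only [Real.cos_abs, sq_abs, Even.pow_abs (show Even 4 by decide)] at h1 h2
  rw [abs_le]; constructor <;> nlinarith [sq_nonneg (x^2)]
theorem cosb6 (x : ℝ) : |Real.cos x - 1 + x ^ 2 / 2 - x ^ 4 / 24| ≤ x ^ 6 / 720 := by
  have h1 := tay4 |x| (abs_nonneg x)
  have h2 := tay6 |x| (abs_nonneg x)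
  simp only [Real.cos_abs, sq_abs, Even.pow_abs (show Even 4 by decide),
    Even.pow_abs (show Even 6 by decide)] at h1 h2
  rw [abs_le]; constructor <;> nlinarith [sq_nonneg (x^3)]
theorem sinb3 (x : ℝ) : |Real.sin x - x| ≤ |x| ^ 3 / 6 := by
  rcases le_total 0 x with hx | hx
  · have h1 := tay1 x hx
    have h2 := tay3 x hx
    rw [abs_of_nonneg hx, abs_le]
    constructor <;> nlinarith [pow_nonneg hx 3]
  · have hx' : 0 ≤ -x := by linarith
    have h1 := tay1 (-x) hx'
    have h2 := tay3 (-x) hx'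
    rw [abs_of_nonpos hx, abs_le]
    rw [Real.sin_neg] at h1 h2
    constructor <;> nlinarith [pow_nonneg hx' 3]
theorem sinb5 (x : ℝ) : |Real.sin x - x + x ^ 3 / 6| ≤ |x| ^ 5 / 120 := by
  rcases le_total 0 x with hx | hx
  · have h1 := tay3 x hx
    have h2 := tay5 x hx
    rw [abs_of_nonneg hx, abs_le]
    constructor <;> nlinarith [pow_nonneg hx 5]
  · have hx' : 0 ≤ -x := by linarith
    have h1 := tay3 (-x) hx'
    have h2 := tay5 (-x) hx'
    rw [abs_of_nonpos hx, abs_le]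
    rw [Real.sin_neg] at h1 h2
    constructor <;> nlinarith [pow_nonneg hx' 5]

theorem abs_hasSum_le {f g : ℕ → ℝ} {s t : ℝ} (hf : HasSum f s) (hg : HasSum g t)
    (h : ∀ k, |f k| ≤ g k) : |s| ≤ t := by
  rw [abs_le]
  exact ⟨hasSum_le (fun k => (abs_le.1 (h k)).1) hg.neg hf,
    hasSum_le (fun k => (abs_le.1 (h k)).2) hf hg⟩

noncomputable def wt (R : ℝ) (k : ℕ) : ℝ := R ^ k / k.factorial

theorem wt_nonneg {R : ℝ} (hR : 0 < R) (k : ℕ) : 0 ≤ wt R k := by unfold wt; positivity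

theorem wt_sum (R : ℝ) : HasSum (wt R) (Real.exp R) := by
  have := NormedSpace.expSeries_div_hasSum_exp (𝔸 := ℝ) R
  rwa [← Real.exp_eq_exp_ℝ] at this

theorem wt_desc (R : ℝ) (j : ℕ) :
    HasSum (fun k => (k.descFactorial j : ℝ) * wt R k) (R ^ j * Real.exp R) := by
  have h0 : ∑ i ∈ Finset.range j, (i.descFactorial j : ℝ) * wt R i = 0 := by
    apply Finset.sum_eq_zero
    intro i hi
    rw [Nat.descFactorial_eq_zero_iff_lt.2 (by simpa using hi)]
    simp
  have h := (hasSum_nat_add_iff (f := fun k => (k.descFactorial j : ℝ) * wt R k) j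
    (g := R ^ j * Real.exp R)).1 ?_
  · rwa [h0, add_zero] at h
  · have e : (fun i => (((i+j).descFactorial j : ℕ) : ℝ) * wt R (i+j)) = fun i => R ^ j * wt R i := by
      funext i
      unfold wt
      have := Nat.factorial_mul_descFactorial (Nat.le_add_left j i)
      rw [Nat.add_sub_cancel] at this
      have h2 : ((i.factorial : ℝ)) * ((i+j).descFactorial j) = (i+j).factorial := by
        exact_mod_cast this
      have h3 : (i.factorial : ℝ) ≠ 0 := by exact_mod_cast i.factorial_ne_zero
      rw [← h2]
      have h4 : ((i+j).descFactorial j : ℝ) ≠ 0 := by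
        have := Nat.descFactorial_eq_zero_iff_lt (n := i+j) (k := j)
        have h5 : (i+j).descFactorial j ≠ 0 := by rw [Ne, this]; omega
        exact_mod_cast h5
      field_simp
      ring
    rw [e]
    exact (wt_sum R).mul_left (R ^ j)

theorem descR (k : ℕ) : ((k.descFactorial 1 : ℕ) : ℝ) = k ∧ ((k.descFactorial 2 : ℕ) : ℝ) = k * (k-1)
   ∧ ((k.descFactorial 3 : ℕ) : ℝ) = k * (k-1) * (k-2)
   ∧ ((k.descFactorial 4 : ℕ) : ℝ) = k * (k-1) * (k-2) * (k-3)
   ∧ ((k.descFactorial 5 : ℕ) : ℝ) = k * (k-1) * (k-2) * (k-3) * (k-4)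
   ∧ ((k.descFactorial 6 : ℕ) : ℝ) = k * (k-1) * (k-2) * (k-3) * (k-4) * (k-5) := by
  have key : ∀ j : ℕ, ((k.descFactorial (j+1) : ℕ) : ℝ) = k.descFactorial j * (k - j) := by
    intro j
    rcases le_or_gt j k with h | h
    · rw [Nat.descFactorial_succ, Nat.cast_mul, Nat.cast_sub h]; ring
    · rw [Nat.descFactorial_eq_zero_iff_lt.2 h, Nat.descFactorial_eq_zero_iff_lt.2 (by omega)]; simp
  have h1 : ((k.descFactorial 1 : ℕ) : ℝ) = k := by rw [Nat.descFactorial_one]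
  have h2 : ((k.descFactorial 2 : ℕ) : ℝ) = k * (k - 1) := by
    rw [key 1, h1]; norm_num
  have h3 : ((k.descFactorial 3 : ℕ) : ℝ) = k * (k - 1) * (k-2) := by
    rw [key 2, h2]; norm_num
  have h4 : ((k.descFactorial 4 : ℕ) : ℝ) = k * (k - 1) * (k-2) * (k-3) := by
    rw [key 3, h3]; norm_num
  have h5 : ((k.descFactorial 5 : ℕ) : ℝ) = k * (k - 1) * (k-2) * (k-3) * (k-4) := by
    rw [key 4, h4]; norm_num
  have h6 : ((k.descFactorial 6 : ℕ) : ℝ) = k * (k - 1) * (k-2) * (k-3) * (k-4) * (k-5) := by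
    rw [key 5, h5]; norm_num
  exact ⟨h1, h2, h3, h4, h5, h6⟩

theorem hs_congr {K : Type*} [AddCommMonoid K] [TopologicalSpace K] {f g : ℕ → K} {a b : K}
    (h : HasSum f a) (hfg : ∀ k, g k = f k) (hab : b = a) : HasSum g b := by
  rw [hab, show g = f from funext hfg]; exact h

theorem mom1 (R : ℝ) : HasSum (fun k : ℕ => (k:ℝ) * wt R k) (Real.exp R * R) := by
  refine hs_congr (wt_desc R 1) (fun k => ?_) ?_
  · rw [(descR k).1]
  · ring
theorem mom2 (R : ℝ) : HasSum (fun k : ℕ => (k:ℝ)^2 * wt R k) (Real.exp R * (R + R^2)) := by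
  refine hs_congr ((wt_desc R 1).add (wt_desc R 2)) (fun k => ?_) ?_
  · obtain ⟨h1, h2, h3, h4, h5, h6⟩ := descR k; rw [h1, h2]; ring
  · ring
theorem mom3 (R : ℝ) : HasSum (fun k : ℕ => (k:ℝ)^3 * wt R k) (Real.exp R * (R + 3*R^2 + R^3)) := by
  refine hs_congr (((wt_desc R 1).add ((wt_desc R 2).mul_left 3)).add (wt_desc R 3)) (fun k => ?_) ?_
  · obtain ⟨h1, h2, h3, h4, h5, h6⟩ := descR k; rw [h1, h2, h3]; ring
  · ring
theorem mom4 (R : ℝ) : HasSum (fun k : ℕ => (k:ℝ)^4 * wt R k)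
    (Real.exp R * (R + 7*R^2 + 6*R^3 + R^4)) := by
  refine hs_congr ((((wt_desc R 1).add ((wt_desc R 2).mul_left 7)).add ((wt_desc R 3).mul_left 6)).add
    (wt_desc R 4)) (fun k => ?_) ?_
  · obtain ⟨h1, h2, h3, h4, h5, h6⟩ := descR k; rw [h1, h2, h3, h4]; ring
  · ring
theorem mom5 (R : ℝ) : HasSum (fun k : ℕ => (k:ℝ)^5 * wt R k)
    (Real.exp R * (R + 15*R^2 + 25*R^3 + 10*R^4 + R^5)) := by
  refine hs_congr (((((wt_desc R 1).add ((wt_desc R 2).mul_left 15)).add ((wt_desc R 3).mul_left 25)).add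
    ((wt_desc R 4).mul_left 10)).add (wt_desc R 5)) (fun k => ?_) ?_
  · obtain ⟨h1, h2, h3, h4, h5, h6⟩ := descR k; rw [h1, h2, h3, h4, h5]; ring
  · ring
theorem mom6 (R : ℝ) : HasSum (fun k : ℕ => (k:ℝ)^6 * wt R k)
    (Real.exp R * (R + 31*R^2 + 90*R^3 + 65*R^4 + 15*R^5 + R^6)) := by
  refine hs_congr ((((((wt_desc R 1).add ((wt_desc R 2).mul_left 31)).add ((wt_desc R 3).mul_left 90)).add
    ((wt_desc R 4).mul_left 65)).add ((wt_desc R 5).mul_left 15)).add (wt_desc R 6)) (fun k => ?_) ?_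
  · obtain ⟨h1, h2, h3, h4, h5, h6⟩ := descR k; rw [h1, h2, h3, h4, h5, h6]; ring
  · ring

theorem psi_sum (R θ : ℝ) : HasSum (fun k : ℕ => (wt R k : ℂ) * Complex.exp (k * θ * Complex.I))
    (((Real.exp R * rePsi R θ : ℝ) : ℂ) + ((Real.exp R * imPsi R θ : ℝ) : ℂ) * Complex.I) := by
  have h := NormedSpace.expSeries_div_hasSum_exp (𝔸 := ℂ) (R * Complex.exp (θ * Complex.I))
  rw [← Complex.exp_eq_exp_ℂ] at h
  refine hs_congr (h) (fun k => ?_) ?_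
  · rw [mul_pow, ← Complex.exp_nat_mul, wt]
    push_cast
    rw [mul_assoc (k:ℂ)]
    ring
  · have e0 : (R * Complex.exp (θ * Complex.I) : ℂ) =
     ((R * Real.cos θ : ℝ) : ℂ) + ((R * Real.sin θ : ℝ) : ℂ) * Complex.I := by
      rw [Complex.exp_mul_I]; push_cast; ring
    have h : Real.exp (R * Real.cos θ) = Real.exp R * Real.exp (-(R * (1 - Real.cos θ))) := by
      rw [← Real.exp_add]; congr 1; ring
    rw [e0, Complex.exp_add_mul_I, ← Complex.ofReal_exp, h, rePsi, imPsi]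
    push_cast
    ring

theorem psi_cos (R θ : ℝ) : HasSum (fun k : ℕ => wt R k * Real.cos (k * θ)) (Real.exp R * rePsi R θ) := by
  have h := Complex.hasSum_re (psi_sum R θ)
  refine hs_congr (h) (fun k => ?_) ?_
  · rw [Complex.re_ofReal_mul]
    congr 1
    rw [← Complex.exp_ofReal_mul_I_re]; push_cast; rfl
  · simp only [Complex.add_re, Complex.re_ofReal_mul, Complex.ofReal_re, Complex.I_re]; ring

theorem psi_sin (R θ : ℝ) : HasSum (fun k : ℕ => wt R k * Real.sin (k * θ)) (Real.exp R * imPsi R θ) := by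
  have h := Complex.hasSum_im (psi_sum R θ)
  refine hs_congr (h) (fun k => ?_) ?_
  · rw [Complex.im_ofReal_mul]
    congr 1
    rw [← Complex.exp_ofReal_mul_I_im]; push_cast; rfl
  · simp only [Complex.add_im, Complex.im_ofReal_mul, Complex.ofReal_im, Complex.I_im]; ring

theorem wbound {R : ℝ} (hR : 0 < R) (k : ℕ) {x y : ℝ} (h : |x| ≤ y) : |wt R k * x| ≤ wt R k * y := by
  rw [abs_mul, abs_of_nonneg (wt_nonneg hR k)]
  exact mul_le_mul_of_nonneg_left h (wt_nonneg hR k)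

theorem T1 {R : ℝ} (hR : 0 < R) (θ : ℝ) :
    |Real.exp R * (rePsi R θ - 1) + Real.exp R * (R + R^2) * θ^2/2|
     ≤ Real.exp R * (R + 7*R^2 + 6*R^3 + R^4) * θ^4/24 := by
  have hs := ((psi_cos R θ).sub (wt_sum R)).add ((mom2 R).mul_right (θ^2/2))
  refine abs_hasSum_le (f := fun k => wt R k * (Real.cos (k*θ) - 1 + (k*θ)^2/2))
    (g := fun k => wt R k * ((k*θ)^4/24)) ?_ ?_ (fun k => wbound hR k (cosb4 _))
  · refine hs_congr (hs) (fun k => ?_) ?_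
    · ring
    · ring
  · refine hs_congr ((mom4 R).mul_right (θ^4/24)) (fun k => ?_) ?_
    · ring
    · ring
theorem T2 {R : ℝ} (hR : 0 < R) (θ : ℝ) :
    |Real.exp R * (rePsi R θ - 1) + Real.exp R * (R + R^2) * θ^2/2
      - Real.exp R * (R + 7*R^2 + 6*R^3 + R^4) * θ^4/24|
     ≤ Real.exp R * (R + 31*R^2 + 90*R^3 + 65*R^4 + 15*R^5 + R^6) * θ^6/720 := by
  have hs := (((psi_cos R θ).sub (wt_sum R)).add ((mom2 R).mul_right (θ^2/2))).sub
    ((mom4 R).mul_right (θ^4/24))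
  refine abs_hasSum_le (f := fun k => wt R k * (Real.cos (k*θ) - 1 + (k*θ)^2/2 - (k*θ)^4/24))
    (g := fun k => wt R k * ((k*θ)^6/720)) ?_ ?_ (fun k => wbound hR k (cosb6 _))
  · refine hs_congr (hs) (fun k => ?_) ?_
    · ring
    · ring
  · refine hs_congr ((mom6 R).mul_right (θ^6/720)) (fun k => ?_) ?_
    · ring
    · ring
theorem T3 {R : ℝ} (hR : 0 < R) (θ : ℝ) :
    |Real.exp R * (imPsi R θ - R * θ)| ≤ Real.exp R * (R + 3*R^2 + R^3) * |θ|^3/6 := by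
  have hs := (psi_sin R θ).sub ((mom1 R).mul_right θ)
  refine abs_hasSum_le (f := fun k => wt R k * (Real.sin (k*θ) - k*θ))
    (g := fun k => wt R k * (|k*θ|^3/6)) ?_ ?_ (fun k => wbound hR k (sinb3 _))
  · refine hs_congr (hs) (fun k => ?_) ?_
    · ring
    · ring
  · refine hs_congr ((mom3 R).mul_right (|θ|^3/6)) (fun k => ?_) ?_
    · rw [abs_mul, Nat.abs_cast]; ring
    · ring
theorem T4 {R : ℝ} (hR : 0 < R) (θ : ℝ) :
    |Real.exp R * (imPsi R θ - R * θ) + Real.exp R * (R + 3*R^2 + R^3) * θ^3/6|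
      ≤ Real.exp R * (R + 15*R^2 + 25*R^3 + 10*R^4 + R^5) * |θ|^5/120 := by
  have hs := ((psi_sin R θ).sub ((mom1 R).mul_right θ)).add ((mom3 R).mul_right (θ^3/6))
  refine abs_hasSum_le (f := fun k => wt R k * (Real.sin (k*θ) - k*θ + (k*θ)^3/6))
    (g := fun k => wt R k * (|k*θ|^5/120)) ?_ ?_ (fun k => wbound hR k (sinb5 _))
  · refine hs_congr (hs) (fun k => ?_) ?_
    · ring
    · ring
  · refine hs_congr ((mom5 R).mul_right (|θ|^5/120)) (fun k => ?_) ?_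
    · rw [abs_mul, Nat.abs_cast]; ring
    · ring


theorem gint (n : ℕ) : MeasureTheory.Integrable (fun u : ℝ => u ^ n * Real.exp (-(u ^ 2 / 2))) := by
  have h := integrable_rpow_mul_exp_neg_mul_sq (b := 1/2) (by norm_num) (s := n)
    (by have : (0:ℝ) ≤ n := n.cast_nonneg
        linarith)
  convert h using 3
  · rw [Real.rpow_natCast]
  · ring_nf

theorem gmom_succ (n : ℕ) : ∫ u : ℝ, u ^ (n+2) * Real.exp (-(u ^ 2 / 2))
    = (n+1) * ∫ u : ℝ, u ^ n * Real.exp (-(u ^ 2 / 2)) := by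
  have hd : ∀ u : ℝ, HasDerivAt (fun u : ℝ => u ^ (n+1) * Real.exp (-(u ^ 2 / 2)))
      ((n+1) * (u ^ n * Real.exp (-(u ^ 2 / 2))) - u ^ (n+2) * Real.exp (-(u ^ 2 / 2))) u := by
    intro u
    have h1 := hasDerivAt_pow (n+1) u
    have h2 := (((hasDerivAt_pow 2 u).div_const 2).neg).exp
    refine (h1.mul h2).congr_deriv ?_
    push_cast
    simp only [Pi.neg_apply]
    norm_num
    ring
  have h := MeasureTheory.integral_eq_zero_of_hasDerivAt_of_integrable hd
    (((gint n).const_mul _).sub (gint (n+2))) (gint (n+1))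
  rw [MeasureTheory.integral_sub ((gint n).const_mul _) (gint (n+2)),
    MeasureTheory.integral_const_mul] at h
  linarith

theorem gm0 : ∫ u : ℝ, Real.exp (-(u ^ 2 / 2)) = Real.sqrt (2 * Real.pi) := by
  have h := integral_gaussian (1/2)
  rw [show Real.pi / (1/2) = 2 * Real.pi by ring] at h
  rw [← h]
  congr 1
  funext u
  ring_nf

theorem gms : (∫ u : ℝ, u^2 * Real.exp (-(u ^ 2 / 2)) = Real.sqrt (2 * Real.pi)) ∧
    (∫ u : ℝ, u^4 * Real.exp (-(u ^ 2 / 2)) = 3 * Real.sqrt (2 * Real.pi)) ∧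
    (∫ u : ℝ, u^6 * Real.exp (-(u ^ 2 / 2)) = 15 * Real.sqrt (2 * Real.pi)) ∧
    (∫ u : ℝ, u^8 * Real.exp (-(u ^ 2 / 2)) = 105 * Real.sqrt (2 * Real.pi)) ∧
    (∫ u : ℝ, u^10 * Real.exp (-(u ^ 2 / 2)) = 945 * Real.sqrt (2 * Real.pi)) ∧
    (∫ u : ℝ, u^12 * Real.exp (-(u ^ 2 / 2)) = 10395 * Real.sqrt (2 * Real.pi)) := by
  have h0 := gmom_succ 0
  have h1 := gmom_succ 2
  have h2 := gmom_succ 4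
  have h3 := gmom_succ 6
  have h4 := gmom_succ 8
  have h5 := gmom_succ 10
  simp only [pow_zero, one_mul, gm0, Nat.reduceAdd] at h0 h1 h2 h3 h4 h5
  rw [h0] at h1
  rw [h1] at h2
  rw [h2] at h3
  rw [h3] at h4
  rw [h4] at h5
  generalize Real.sqrt (2 * Real.pi) = v at *
  norm_num at h0 h1 h2 h3 h4 h5
  exact ⟨by rw [h0], by rw [h1], by rw [h2]; ring, by rw [h3]; ring, by rw [h4]; ring,
   by rw [h5]; ring⟩

theorem gadd {f g : ℝ → ℝ} {a b : ℝ} (hf : MeasureTheory.Integrable f ∧ ∫ u, f u = a)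
    (hg : MeasureTheory.Integrable g ∧ ∫ u, g u = b) :
    MeasureTheory.Integrable (fun u => f u + g u) ∧ ∫ u, (f u + g u) = a + b :=
  ⟨hf.1.add hg.1, by rw [MeasureTheory.integral_add hf.1 hg.1, hf.2, hg.2]⟩

theorem gmono (c : ℝ) (n : ℕ) {a : ℝ} (h : ∫ u : ℝ, u ^ n * Real.exp (-(u ^ 2 / 2)) = a) :
    MeasureTheory.Integrable (fun u : ℝ => c * (u ^ n * Real.exp (-(u ^ 2 / 2)))) ∧
    ∫ u : ℝ, c * (u ^ n * Real.exp (-(u ^ 2 / 2))) = c * a :=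
  ⟨(gint n).const_mul c, by rw [MeasureTheory.integral_const_mul, h]⟩

/-- general even polynomial against the Gaussian -/
theorem gpoly (c0 c2 c4 c6 c8 c10 c12 : ℝ) :
    MeasureTheory.Integrable (fun u : ℝ =>
      (c0 + c2*u^2 + c4*u^4 + c6*u^6 + c8*u^8 + c10*u^10 + c12*u^12) * Real.exp (-(u ^ 2 / 2))) ∧
    ∫ u : ℝ, (c0 + c2*u^2 + c4*u^4 + c6*u^6 + c8*u^8 + c10*u^10 + c12*u^12) * Real.exp (-(u ^ 2 / 2))
     = (c0 + c2 + 3*c4 + 15*c6 + 105*c8 + 945*c10 + 10395*c12) * Real.sqrt (2*Real.pi) := by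
  obtain ⟨g2, g4, g6, g8, g10, g12⟩ := gms
  have g0 : ∫ u : ℝ, u^0 * Real.exp (-(u ^ 2 / 2)) = Real.sqrt (2 * Real.pi) := by
    simp only [pow_zero, one_mul, gm0]
  have h := gadd (gadd (gadd (gadd (gadd (gadd (gmono c0 0 g0) (gmono c2 2 g2)) (gmono c4 4 g4))
    (gmono c6 6 g6)) (gmono c8 8 g8)) (gmono c10 10 g10)) (gmono c12 12 g12)
  have e : (fun u : ℝ =>
      (c0 + c2*u^2 + c4*u^4 + c6*u^6 + c8*u^8 + c10*u^10 + c12*u^12) * Real.exp (-(u ^ 2 / 2)))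
     = fun u : ℝ => c0 * (u^0 * Real.exp (-(u ^ 2 / 2))) + c2 * (u^2 * Real.exp (-(u ^ 2 / 2)))
     + c4 * (u^4 * Real.exp (-(u ^ 2 / 2))) + c6 * (u^6 * Real.exp (-(u ^ 2 / 2)))
     + c8 * (u^8 * Real.exp (-(u ^ 2 / 2))) + c10 * (u^10 * Real.exp (-(u ^ 2 / 2)))
     + c12 * (u^12 * Real.exp (-(u ^ 2 / 2))) := by
    funext u; ring
  rw [e]
  refine ⟨h.1, h.2.trans ?_⟩
  ring

theorem gscale {g : ℝ → ℝ} {a : ℝ} (ha : 0 < a) (hg : MeasureTheory.Integrable g) :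
    MeasureTheory.Integrable (fun t => g (a * t)) ∧ ∫ t, g (a * t) = a⁻¹ * ∫ t, g t := by
  refine ⟨hg.comp_mul_left' ha.ne', ?_⟩
  have h := MeasureTheory.Measure.integral_comp_mul_left g a
  rw [smul_eq_mul, abs_of_pos (inv_pos.2 ha)] at h
  exact h

/-- the dominating polynomial -/
noncomputable def QQ (t : ℝ) : ℝ := 0.00005*t^4 + 0.012*t^6 + 0.0112*t^8 + 0.0019*t^10 + 0.000088*t^12

theorem QQ_int : MeasureTheory.Integrable (fun t : ℝ => QQ t * Real.exp (-((20/21)^2 * t^2/2))) ∧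
    ∫ t : ℝ, QQ t * Real.exp (-((20/21)^2 * t^2/2)) ≤ 6.9 * Real.sqrt (2*Real.pi) := by
  obtain ⟨h1, h2⟩ := gpoly 0 0 (0.00005*(21/20)^4) (0.012*(21/20)^6) (0.0112*(21/20)^8)
    (0.0019*(21/20)^10) (0.000088*(21/20)^12)
  have e : (fun t : ℝ => QQ t * Real.exp (-((20/21)^2 * t^2/2))) = fun t => (fun u : ℝ =>
     (0 + 0*u^2 + (0.00005*(21/20)^4)*u^4 + (0.012*(21/20)^6)*u^6 + (0.0112*(21/20)^8)*u^8
     + (0.0019*(21/20)^10)*u^10 + (0.000088*(21/20)^12)*u^12) * Real.exp (-(u ^ 2 / 2)))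
      ((20/21) * t) := by
    funext t
    simp only
    rw [show ((20/21 : ℝ)^2 * t^2/2) = (20/21*t)^2/2 by ring]
    congr 1
    unfold QQ
    ring
  rw [e]
  obtain ⟨k1, k2⟩ := gscale (a := 20/21) (by norm_num) h1
  refine ⟨k1, k2.trans_le ?_⟩
  rw [h2, ← mul_assoc]
  apply mul_le_mul_of_nonneg_right _ (Real.sqrt_nonneg _)
  norm_num


theorem exp_tay2 (x : ℝ) : |Real.exp x - 1 - x| ≤ x^2/2 * Real.exp |x| := by
  have key : ∀ y : ℝ, 0 ≤ y → 0 ≤ y^2/2 - 1 + (1+y) * Real.exp (-y) := by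
    apply nonneg_of_deriv (f' := fun y => y - y * Real.exp (-y)) (by simp)
    · intro y
      refine ((((hasDerivAt_pow 2 y).div_const 2).sub_const 1).add
        (((hasDerivAt_id y).const_add 1).mul ((hasDerivAt_id y).neg.exp))).congr_deriv ?_
      norm_num; ring
    · intro y hy
      have : Real.exp (-y) ≤ 1 := Real.exp_le_one_iff.2 (by linarith)
      nlinarith
  have h := Complex.norm_exp_sub_sum_le_exp_norm_sub_sum (x : ℂ) 2
  simp only [Finset.sum_range_succ, Finset.sum_range_zero, Complex.norm_real, Real.norm_eq_abs] at h
  norm_num at h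
  have e : Complex.exp x - (1 + x) = ((Real.exp x - 1 - x : ℝ) : ℂ) := by push_cast; ring
  rw [e, Complex.norm_real, Real.norm_eq_abs] at h
  have k := key |x| (abs_nonneg x)
  have h3 : Real.exp (-|x|) * Real.exp |x| = 1 := by rw [← Real.exp_add]; simp
  have hp := Real.exp_pos |x|
  rw [sq_abs] at k
  have k2 := mul_nonneg k hp.le
  have : (x^2/2 - 1 + (1+|x|) * Real.exp (-|x|)) * Real.exp |x|
    = x^2/2 * Real.exp |x| - Real.exp |x| + (1+|x|) * (Real.exp (-|x|) * Real.exp |x|) := by ring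
  rw [this, h3] at k2
  linarith

theorem exp_tay1 (x : ℝ) : |Real.exp x - 1| ≤ |x| * Real.exp |x| := by
  have h := Complex.norm_exp_sub_sum_le_norm_mul_exp (x : ℂ) 1
  simp only [Finset.sum_range_succ, Finset.sum_range_zero, Complex.norm_real, Real.norm_eq_abs] at h
  norm_num at h
  have e : Complex.exp x - 1 = ((Real.exp x - 1 : ℝ) : ℂ) := by push_cast; ring
  rw [e, Complex.norm_real, Real.norm_eq_abs] at h
  exact h

theorem L1 (x b κ β : ℝ) : |Real.exp x * Real.cos b - (1 + κ - β/2)| ≤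
    Real.exp |x| * (x^2/2 + |x| * b^2/2 + b^4/24) + |x - κ| + |b^2 - β|/2 := by
  have e : Real.exp x * Real.cos b - (1 + κ - β/2) =
    (Real.exp x - 1 - x) + (Real.exp x - 1) * (Real.cos b - 1) + (Real.cos b - 1 + b^2/2)
     + (x - κ) + (-(b^2 - β)/2) := by ring
  have h1 := exp_tay2 x
  have h2 := exp_tay1 x
  have h3 := cosb4 b
  have h4 : |Real.cos b - 1| ≤ b^2/2 := by
    rw [abs_le]
    have := Real.one_sub_sq_div_two_le_cos (x := b)
    have h5 := Real.cos_le_one b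
    constructor <;> nlinarith [sq_nonneg b]
  have h5 : |(Real.exp x - 1) * (Real.cos b - 1)| ≤ (|x| * Real.exp |x|) * (b^2/2) := by
    rw [abs_mul]
    exact mul_le_mul h2 h4 (abs_nonneg _) (by positivity)
  have h6 : |(-(b^2 - β)/2)| = |b^2 - β|/2 := by
    rw [abs_div, abs_neg, abs_two]
  have h7 : b^4/24 ≤ Real.exp |x| * (b^4/24) := by
    have : 1 ≤ Real.exp |x| := Real.one_le_exp (abs_nonneg x)
    have : 0 ≤ b^4/24 := by positivity
    nlinarith
  rw [e]
  refine (abs_add_le _ _).trans ?_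
  rw [h6]
  have a1 := abs_add_le ((Real.exp x - 1 - x) + (Real.exp x - 1) * (Real.cos b - 1) + (Real.cos b - 1 + b^2/2)) (x - κ)
  have a2 := abs_add_le ((Real.exp x - 1 - x) + (Real.exp x - 1) * (Real.cos b - 1)) (Real.cos b - 1 + b^2/2)
  have a3 := abs_add_le (Real.exp x - 1 - x) ((Real.exp x - 1) * (Real.cos b - 1))
  nlinarith

/-- `QQ` in the variable `w = t^2` -/
noncomputable def Qw (w : ℝ) : ℝ := 0.00005*w^2 + 0.012*w^3 + 0.0112*w^4 + 0.0019*w^5 + 0.000088*w^6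

theorem L2 (a b κ β w P : ℝ) (hw : 0 ≤ w) (hP : 0 ≤ P)
    (h1 : |a + w/2| ≤ 0.072 * w^2 * P) (h1' : |a + w/2| ≤ (1 - (20/21)^2) * w/2)
    (h2 : |a + w/2 - κ| ≤ 0.005925 * w^3 * P^2)
    (h3 : b^2 ≤ (w/30 + 0.07594 * w^2 + 0.04324 * w^3) * P)
    (h4 : |b^2 - β|/2 ≤ (0.003976 * w^3 + 0.004528 * w^4) * P^2) :
    |Real.exp a * Real.cos b - Real.exp (-(w/2)) * (1 + κ - β/2)| ≤
      Real.exp (-((20/21)^2*w/2)) * (P^2 * Qw w) := by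
  have hL := L1 (a + w/2) b κ β
  have e : Real.exp a * Real.cos b - Real.exp (-(w/2)) * (1 + κ - β/2) =
     Real.exp (-(w/2)) * (Real.exp (a + w/2) * Real.cos b - (1 + κ - β/2)) := by
    have : Real.exp a = Real.exp (-(w/2)) * Real.exp (a + w/2) := by
      rw [← Real.exp_add]; congr 1; ring
    rw [this]; ring
  rw [e, abs_mul, abs_of_pos (Real.exp_pos _)]
  set X := |a + w/2| with hX
  have hX0 : 0 ≤ X := abs_nonneg _
  have hxx : (a + w/2)^2 = X^2 := by rw [hX, sq_abs]
  rw [hxx] at hL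
  have e1 : Real.exp (-(w/2)) * Real.exp X ≤ Real.exp (-((20/21)^2*w/2)) := by
    rw [← Real.exp_add]; apply Real.exp_le_exp.2; linarith
  have e2 : Real.exp (-(w/2)) ≤ Real.exp (-((20/21)^2*w/2)) := by
    apply Real.exp_le_exp.2; linarith
  set q := w/30 + 0.07594 * w^2 + 0.04324 * w^3 with hq
  have hq0 : 0 ≤ q := by positivity
  have b0 : 0 ≤ b^2 := sq_nonneg b
  have f1 : X^2 ≤ (0.072 * w^2 * P)^2 := pow_le_pow_left₀ hX0 h1 2
  have f2 : X * b^2 ≤ (0.072 * w^2 * P) * (q * P) := mul_le_mul h1 h3 b0 (by positivity)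
  have f3 : b^4 ≤ (q * P)^2 := by
    rw [show b^4 = (b^2)^2 by ring]; exact pow_le_pow_left₀ b0 h3 2
  set Z := (0.072 * w^2 * P)^2/2 + (0.072 * w^2 * P) * (q * P)/2 + (q * P)^2/24 with hZ
  have f4 : X^2/2 + X * b^2/2 + b^4/24 ≤ Z := by rw [hZ]; linarith
  have f5 : 0 ≤ X^2/2 + X * b^2/2 + b^4/24 := by positivity
  have hE := Real.exp_pos (-(w/2))
  set V := (0.005925 * w^3 * P^2) + (0.003976 * w^3 + 0.004528 * w^4) * P^2 with hV
  have hV0 : 0 ≤ V := by positivity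
  have hZ0 : 0 ≤ Z := f5.trans f4
  calc Real.exp (-(w/2)) * |Real.exp (a + w/2) * Real.cos b - (1 + κ - β/2)|
      ≤ Real.exp (-(w/2)) * (Real.exp X * Z + V) := by
        apply mul_le_mul_of_nonneg_left _ hE.le
        have := mul_le_mul_of_nonneg_left f4 (Real.exp_pos X).le
        rw [hV]; linarith
    _ = (Real.exp (-(w/2)) * Real.exp X) * Z + Real.exp (-(w/2)) * V := by ring
    _ ≤ Real.exp (-((20/21)^2*w/2)) * Z + Real.exp (-((20/21)^2*w/2)) * V :=
        add_le_add (mul_le_mul_of_nonneg_right e1 hZ0) (mul_le_mul_of_nonneg_right e2 hV0)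
    _ = Real.exp (-((20/21)^2*w/2)) * (Z + V) := by ring
    _ ≤ _ := by
        apply mul_le_mul_of_nonneg_left _ (Real.exp_pos _).le
        rw [hZ, hV, hq]
        have : P^2 * Qw w - ((0.072 * w^2 * P)^2/2 + (0.072 * w^2 * P) * ((w/30 + 0.07594 * w^2 + 0.04324 * w^3) * P)/2 + ((w/30 + 0.07594 * w^2 + 0.04324 * w^3) * P)^2/24 + ((0.005925 * w^3 * P^2) + (0.003976 * w^3 + 0.004528 * w^4) * P^2)) = P^2 * (w^2 * (0.00005 - 1/21600)
          + w^3 * (0.012 - (0.072/60 + 2*0.07594/720 + 0.005925 + 0.003976))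
          + w^4 * (0.0112 - (0.072^2/2 + 0.072*0.07594/2 + (0.07594^2+0.04324/15)/24 + 0.004528))
          + w^5 * (0.0019 - (0.072*0.04324/2 + 0.07594*0.04324/12))
          + w^6 * (0.000088 - 0.04324^2/24)) := by unfold Qw; ring
        have h9 : 0 ≤ P^2 * (w^2 * (0.00005 - 1/21600)
          + w^3 * (0.012 - (0.072/60 + 2*0.07594/720 + 0.005925 + 0.003976))
          + w^4 * (0.0112 - (0.072^2/2 + 0.072*0.07594/2 + (0.07594^2+0.04324/15)/24 + 0.004528))
          + w^5 * (0.0019 - (0.072*0.04324/2 + 0.07594*0.04324/12))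
          + w^6 * (0.000088 - 0.04324^2/24)) := by norm_num; positivity
        linarith

theorem L3 (κ β w P : ℝ) (hw : 0 ≤ w) (hP : 0 ≤ P)
    (h1 : |κ| ≤ 0.072 * w^2 * P)
    (h3 : |β| ≤ (w/30 + 0.07594 * w^2 + 0.04324 * w^3) * P)
    (h4 : 0.49 ≤ w * P) (h5 : 72 ≤ w) :
    |Real.exp (-(w/2)) * (1 + κ - β/2)| ≤
      Real.exp (-((20/21)^2*w/2)) * (P^2 * Qw w) := by
  rw [abs_mul, abs_of_pos (Real.exp_pos _)]
  have e2 : Real.exp (-(w/2)) ≤ Real.exp (-((20/21)^2*w/2)) := by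
    apply Real.exp_le_exp.2; linarith
  apply mul_le_mul e2 _ (abs_nonneg _) (Real.exp_pos _).le
  have k : |1 + κ - β/2| ≤ 1 + 0.072 * w^2 * P + (w/30 + 0.07594 * w^2 + 0.04324 * w^3) * P/2 := by
    rw [abs_le] at h1 h3 ⊢
    constructor <;> nlinarith [h1.1, h1.2, h3.1, h3.2]
  refine k.trans ?_
  have hQ : 0.0019 * w^5 ≤ Qw w := by
    unfold Qw
    have : 0 ≤ 0.00005*w^2 + 0.012*w^3 + 0.0112*w^4 + 0.000088*w^6 := by positivity
    linarith
  have hQ2 : P^2 * (0.0019 * w^5) ≤ P^2 * Qw w := mul_le_mul_of_nonneg_left hQ (by positivity)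
  refine le_trans ?_ hQ2
  set z := w * P with hz
  have e : P^2 * (0.0019 * w^5) = 0.0019 * (z * z) * w^3 := by rw [hz]; ring
  have e3 : 1 + 0.072 * w^2 * P + (w/30 + 0.07594 * w^2 + 0.04324 * w^3) * P/2
     = 1 + z * (1/60 + 0.10997 * w + 0.02162 * w^2) := by rw [hz]; ring
  rw [e, e3]
  have w2 : 72 * w ≤ w^2 := by nlinarith
  have w3 : 72 * w^2 ≤ w^3 := by nlinarith [sq_nonneg w]
  have z2 : 0.49 * z ≤ z * z := by nlinarith
  have z3 : 0.0019 * (0.49 * z) * (72 * w^2) ≤ 0.0019 * (z * z) * w^3 := by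
    apply mul_le_mul (by linarith) w3 (by positivity) (by positivity)
  refine le_trans ?_ z3
  have : 1/60 + 0.10997 * w + 0.02162 * w^2 + 3 ≤ 0.0019*0.49*72 * w^2 := by nlinarith
  nlinarith


/-- assumptions on the moments -/
structure MOK (m2 m3 m4 m5 m6 : ℝ) : Prop where
  p2 : 30 ≤ m2
  p3 : 0 ≤ m3
  p4 : 0 ≤ m4
  p5 : 0 ≤ m5
  p6 : 0 ≤ m6
  q4 : m4 ≤ 1.728 * m2^2
  q3 : m3 ≤ 0.22782 * m2^2
  q33 : m3^2 ≤ 1.55664 * m2^3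
  q6 : m6 ≤ 4.266 * m2^3
  q5 : m5 ≤ 0.47712 * m2^3
  q35 : m3 * m5 ≤ 3.26016 * m2^4

theorem betaBound {N m2 m3 m4 m5 m6 θ c : ℝ} (hN : 0 < N) (h : MOK m2 m3 m4 m5 m6)
    (hc : |c| ≤ |θ| + N*m3*|θ|^3/6) :
    c^2 ≤ (N*m2*θ^2/30 + 0.07594 * (N*m2*θ^2)^2 + 0.04324 * (N*m2*θ^2)^3) * N⁻¹ := by
  obtain ⟨p2, p3, p4, p5, p6, q4, q3, q33, q6, q5, q35⟩ := h
  have h1 : c^2 ≤ (|θ| + N*m3*|θ|^3/6)^2 := by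
    rw [← sq_abs c]; exact pow_le_pow_left₀ (abs_nonneg _) hc 2
  refine h1.trans ?_
  rw [← sq_abs θ]
  set y := |θ| with hy
  have y0 : 0 ≤ y := abs_nonneg _
  have e : (N*m2*y^2/30 + 0.07594 * (N*m2*y^2)^2 + 0.04324 * (N*m2*y^2)^3) * N⁻¹
    = m2*y^2/30 + 0.07594 * (N*m2^2*y^4) + 0.04324 * (N^2*m2^3*y^6) := by
    field_simp
  rw [e]
  have e2 : (y + N*m3*y^3/6)^2 = y^2 + (N*y^4/3)*m3 + (N^2*y^6/36)*m3^2 := by ring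
  rw [e2]
  have k1 : (N*y^4/3)*m3 ≤ (N*y^4/3)*(0.22782 * m2^2) := mul_le_mul_of_nonneg_left q3 (by positivity)
  have k2 : (N^2*y^6/36)*m3^2 ≤ (N^2*y^6/36)*(1.55664 * m2^3) := mul_le_mul_of_nonneg_left q33 (by positivity)
  have k3 : y^2 ≤ m2*y^2/30 := by nlinarith [sq_nonneg y]
  have k4 : (N*y^4/3)*(0.22782 * m2^2) = 0.07594 * (N*m2^2*y^4) := by ring
  have k5 : (N^2*y^6/36)*(1.55664 * m2^3) = 0.04324 * (N^2*m2^3*y^6) := by ring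
  linarith

theorem main_abs {N m2 m3 m4 m5 m6 θ a b c : ℝ} (hN : 0 < N) (h : MOK m2 m3 m4 m5 m6)
    (t1 : |a + N*m2*θ^2/2| ≤ N*m4*θ^4/24)
    (t2 : |a + N*m2*θ^2/2 - N*m4*θ^4/24| ≤ N*m6*θ^6/720)
    (t3 : |c| ≤ N*m3*|θ|^3/6) (t4 : |c + N*m3*θ^3/6| ≤ N*m5*|θ|^5/120)
    (hb : b = c + θ) (hθ : m4*θ^2 ≤ 1.1 * m2) :
    |Real.exp a * Real.cos b - Real.exp (-(N*m2*θ^2/2)) * (1 + N*m4*θ^4/24 - (θ - N*m3*θ^3/6)^2/2)| ≤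
      Real.exp (-((20/21)^2*(N*m2*θ^2)/2)) * ((N⁻¹)^2 * Qw (N*m2*θ^2)) := by
  have hM := h
  obtain ⟨p2, p3, p4, p5, p6, q4, q3, q33, q6, q5, q35⟩ := h
  have hbb : |b| ≤ |θ| + N*m3*|θ|^3/6 := by
    rw [hb]; refine (abs_add_le _ _).trans ?_; linarith
  have hb1 : |θ - N*m3*θ^3/6| ≤ |θ| + N*m3*|θ|^3/6 := by
    refine (abs_sub _ _).trans ?_
    rw [abs_div, abs_mul, abs_mul, abs_pow, abs_of_pos hN, abs_of_nonneg p3]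
    norm_num
  apply L2
  · positivity
  · positivity
  · refine t1.trans ?_
    have e : 0.072 * (N*m2*θ^2)^2 * N⁻¹ = (N*θ^4/24)*(1.728*m2^2) := by field_simp; norm_num; ring
    rw [e]
    have := mul_le_mul_of_nonneg_left q4 (show 0 ≤ N*θ^4/24 by positivity)
    linarith
  · refine t1.trans ?_
    have := mul_le_mul_of_nonneg_left hθ (show 0 ≤ N*θ^2/24 by positivity)
    have h2 : 0 ≤ N*m2*θ^2 := by positivity
    norm_num
    nlinarith
  · refine t2.trans ?_
    have e : 0.005925 * (N*m2*θ^2)^3 * (N⁻¹)^2 = (N*θ^6/720)*(4.266*m2^3) := by field_simp; norm_num; ring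
    rw [e]
    have := mul_le_mul_of_nonneg_left q6 (show 0 ≤ N*θ^6/720 by positivity)
    linarith
  · exact betaBound hN hM hbb
  · have e0 : b^2 - (θ - N*m3*θ^3/6)^2 = (c + N*m3*θ^3/6) * (b + (θ - N*m3*θ^3/6)) := by rw [hb]; ring
    rw [e0, abs_mul]
    have s1 : |b + (θ - N*m3*θ^3/6)| ≤ 2 * (|θ| + N*m3*|θ|^3/6) :=
      (abs_add_le _ _).trans (by linarith)
    have s2 := mul_le_mul t4 s1 (abs_nonneg _) (by positivity)
    have e1 : (0.003976 * (N*m2*θ^2)^3 + 0.004528 * (N*m2*θ^2)^4) * (N⁻¹)^2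
      = (N*|θ|^6/120)*(0.47712*m2^3) + (N^2*|θ|^8/720)*(3.26016*m2^4) := by
      rw [← sq_abs θ]
      field_simp
      ring
    rw [e1]
    have k1 := mul_le_mul_of_nonneg_left q5 (show 0 ≤ N*|θ|^6/120 by positivity)
    have k2 := mul_le_mul_of_nonneg_left q35 (show 0 ≤ N^2*|θ|^8/720 by positivity)
    have e2 : N*m5*|θ|^5/120 * (2 * (|θ| + N*m3*|θ|^3/6)) =
      2 * ((N*|θ|^6/120)*m5 + (N^2*|θ|^8/720)*(m3*m5)) := by ring
    linarith

theorem tail_abs {N m2 m3 m4 m5 m6 θ : ℝ} (hN : 148 ≤ N) (h : MOK m2 m3 m4 m5 m6)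
    (hθ : 0.49 ≤ m2*θ^2) :
    |Real.exp (-(N*m2*θ^2/2)) * (1 + N*m4*θ^4/24 - (θ - N*m3*θ^3/6)^2/2)| ≤
      Real.exp (-((20/21)^2*(N*m2*θ^2)/2)) * ((N⁻¹)^2 * Qw (N*m2*θ^2)) := by
  have hM := h
  obtain ⟨p2, p3, p4, p5, p6, q4, q3, q33, q6, q5, q35⟩ := h
  have hN0 : 0 < N := by linarith
  have hb1 : |θ - N*m3*θ^3/6| ≤ |θ| + N*m3*|θ|^3/6 := by
    refine (abs_sub _ _).trans ?_
    rw [abs_div, abs_mul, abs_mul, abs_pow, abs_of_pos hN0, abs_of_nonneg p3]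
    norm_num
  apply L3
  · positivity
  · positivity
  · rw [abs_of_nonneg (by positivity)]
    have e : 0.072 * (N*m2*θ^2)^2 * N⁻¹ = (N*θ^4/24)*(1.728*m2^2) := by field_simp; norm_num; ring
    rw [e]
    have := mul_le_mul_of_nonneg_left q4 (show 0 ≤ N*θ^4/24 by positivity)
    linarith
  · rw [abs_of_nonneg (by positivity)]
    exact betaBound hN0 hM hb1
  · have : N*m2*θ^2*N⁻¹ = m2*θ^2 := by field_simp
    rw [this]; exact hθ
  · nlinarith

theorem mok {R : ℝ} (hR : 5 ≤ R) : MOK (R + R^2) (R + 3*R^2 + R^3) (R + 7*R^2 + 6*R^3 + R^4)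
    (R + 15*R^2 + 25*R^3 + 10*R^4 + R^5) (R + 31*R^2 + 90*R^3 + 65*R^4 + 15*R^5 + R^6) := by
  obtain ⟨r, rfl⟩ : ∃ r, R = 5 + r := ⟨R - 5, by ring⟩
  have hr : 0 ≤ r := by linarith
  refine ⟨?_, by positivity, by positivity, by positivity, by positivity, ?_, ?_, ?_, ?_, ?_, ?_⟩ <;>
  · rw [← sub_nonneg]
    ring_nf
    positivity

theorem m4b {R : ℝ} (hR : 5 ≤ R) : (R + 7*R^2 + 6*R^3 + R^4) ≤ 2.0734 * R^2 * (R+R^2) := by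
  obtain ⟨r, rfl⟩ : ∃ r, R = 5 + r := ⟨R - 5, by ring⟩
  have hr : 0 ≤ r := by linarith
  rw [← sub_nonneg]
  ring_nf
  positivity


theorem expR {R : ℝ} (hR : 5 ≤ R) : 148 * (1 + (R-5) + (R-5)^2/2) ≤ Real.exp R := by
  have h1 := Real.quadratic_le_exp_of_nonneg (show 0 ≤ R - 5 by linarith)
  have h2 : (148:ℝ) ≤ Real.exp 5 := by
    have := Real.exp_one_gt_d9
    have h3 : Real.exp 5 = Real.exp 1 ^ 5 := by rw [← Real.exp_nat_mul]; norm_num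
    rw [h3]
    calc (148:ℝ) ≤ 2.718281^5 := by norm_num
      _ ≤ _ := pow_le_pow_left₀ (by norm_num) (by linarith) 5
  have h3 : Real.exp R = Real.exp 5 * Real.exp (R-5) := by rw [← Real.exp_add]; congr 1; ring
  rw [h3]
  exact mul_le_mul h2 h1 (by nlinarith [sq_nonneg (R-5)]) (Real.exp_pos _).le

theorem rePsi_neg (R θ : ℝ) : rePsi R (-θ) = rePsi R θ := by
  unfold rePsi; simp

theorem outerA {R θ : ℝ} (hR : 5 ≤ R) (h1 : 0.7 ≤ R*θ) (h2 : R*θ ≤ 4.5) : rePsi R θ ≤ 0.8 := by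
  have hθ : 0 < θ := by
    by_contra h
    have : R*θ ≤ 0 := mul_nonpos_of_nonneg_of_nonpos (by linarith) (by linarith)
    linarith
  have hθ2 : θ ≤ 0.9 := by nlinarith
  have hs := Real.sin_gt_sub_cube hθ
  have hs2 := Real.sin_le hθ.le
  have ylo : 0.65 ≤ R * Real.sin θ := by
    have : R * (θ - θ^3/6) ≤ R * Real.sin θ := mul_le_mul_of_nonneg_left hs.le (by linarith)
    refine le_trans ?_ this
    rw [show R * (θ - θ^3/6) = (R*θ) * (1 - θ^2/6) by ring]
    rcases le_total (R*θ) 0.9 with h | h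
    · have : θ ≤ 0.18 := by nlinarith
      have : θ^2 ≤ 0.0324 := by nlinarith
      nlinarith
    · have : θ^2 ≤ 0.81 := by nlinarith
      nlinarith
  have yhi : R * Real.sin θ ≤ 4.5 := by
    have : R * Real.sin θ ≤ R * θ := mul_le_mul_of_nonneg_left hs2 (by linarith)
    linarith
  set y := R * Real.sin θ with hy
  have hE : Real.exp (-(R * (1 - Real.cos θ))) ≤ 1 := by
    apply Real.exp_le_one_iff.2
    have := Real.cos_le_one θ
    nlinarith
  have hE0 := Real.exp_pos (-(R * (1 - Real.cos θ)))
  have hpi := Real.pi_gt_d2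
  have hc : Real.cos y ≤ 0.8 := by
    rcases le_total y (Real.pi/2) with h | h
    · have h3 : Real.cos y ≤ Real.cos 0.65 :=
        Real.cos_le_cos_of_nonneg_of_le_pi (by norm_num) (by linarith) ylo
      have h4 := tay4 0.65 (by norm_num)
      norm_num at h4 h3 ⊢
      linarith
    · have := Real.cos_nonpos_of_pi_div_two_le_of_le h (by linarith)
      linarith
  unfold rePsi
  rw [← hy]
  rcases le_total 0 (Real.cos y) with h | h
  · nlinarith
  · nlinarith

theorem outerB {R θ : ℝ} (hR : 5 ≤ R) (h1 : 4.5 ≤ R*θ) (h2 : θ ≤ Real.pi) (h0 : 0 ≤ θ) :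
    rePsi R θ ≤ R/(R+4) := by
  have hc := Real.cos_le_one_sub_mul_cos_sq (x := θ) (by rw [abs_of_nonneg h0]; exact h2)
  have hpi := Real.pi_lt_d2
  have hpi0 := Real.pi_pos
  have hpi2 : Real.pi^2 ≤ 10 := by nlinarith
  have h3 : 4/R ≤ R * (1 - Real.cos θ) := by
    have h4 : 0.2 * θ^2 ≤ 2/Real.pi^2*θ^2 := by
      apply mul_le_mul_of_nonneg_right _ (sq_nonneg θ)
      rw [le_div_iff₀ (by positivity)]
      linarith
    have h5 : 0.2 * θ^2 ≤ 1 - Real.cos θ := by linarith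
    rw [div_le_iff₀ (by linarith)]
    have : (0.2 * θ^2) * (R*R) ≤ (1 - Real.cos θ) * (R*R) :=
      mul_le_mul_of_nonneg_right h5 (by positivity)
    nlinarith
  unfold rePsi
  have hE : Real.exp (-(R * (1 - Real.cos θ))) ≤ R/(R+4) := by
    rw [Real.exp_neg]
    have h6 : 1 + 4/R ≤ Real.exp (R * (1 - Real.cos θ)) := by
      have := Real.add_one_le_exp (R * (1 - Real.cos θ))
      linarith
    have h7 : R/(R+4) = (1+4/R)⁻¹ := by
      have : R ≠ 0 := by linarith
      have : R + 4 ≠ 0 := by linarith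
      field_simp
    rw [h7]
    apply inv_anti₀ _ h6
    have : 0 < R := by linarith
    positivity
  have hE0 := Real.exp_pos (-(R * (1 - Real.cos θ)))
  have := Real.cos_le_one (R * Real.sin θ)
  nlinarith

theorem outer_re {R θ : ℝ} (hR : 5 ≤ R) (h1 : 0.7 ≤ R*|θ|) (h2 : |θ| ≤ Real.pi) :
    Real.exp R * (rePsi R θ - 1) ≤ -(5*R) := by
  have e : rePsi R θ = rePsi R |θ| := by
    rcases abs_choice θ with h | h
    · rw [h]
    · rw [h, rePsi_neg]
  rw [e]
  have hN := expR hR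
  have hr : 0 ≤ R - 5 := by linarith
  rcases le_total (R*|θ|) 4.5 with h | h
  · have := outerA hR h1 h
    nlinarith [sq_nonneg (R-5)]
  · have := outerB hR h h2 (abs_nonneg θ)
    have h3 : rePsi R |θ| - 1 ≤ -(4/(R+4)) := by
      have : R/(R+4) - 1 = -(4/(R+4)) := by
        have : R + 4 ≠ 0 := by linarith
        field_simp; ring
      linarith
    have h4 := mul_le_mul_of_nonneg_left h3 (Real.exp_pos R).le
    refine h4.trans ?_
    rw [mul_neg, neg_le_neg_iff, mul_div_assoc', le_div_iff₀ (by linarith)]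
    nlinarith [sq_nonneg (R-5)]

theorem outer_F {R θ : ℝ} (n : ℕ) (hR : 5 ≤ R) (h1 : 0.7 ≤ R*|θ|) (h2 : |θ| ≤ Real.pi) :
    |FF n R θ| ≤ ((Real.exp R)⁻¹)^5 := by
  unfold FF
  rw [abs_mul, abs_of_pos (Real.exp_pos _), ← Real.exp_neg, ← Real.exp_nat_mul]
  have h := Real.exp_le_exp.2 (outer_re hR h1 h2)
  have hc := Real.abs_cos_le_one (Real.exp R * imPsi R θ - n * θ)
  have e : ((5:ℕ):ℝ) * -R = -(5*R) := by push_cast; ring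
  rw [e]
  have := Real.exp_pos (Real.exp R * (rePsi R θ - 1))
  nlinarith [abs_nonneg (Real.cos (Real.exp R * imPsi R θ - n * θ))]


noncomputable def GG (R θ : ℝ) : ℝ :=
  Real.exp (-(Real.exp R*(R + R^2)*θ^2/2)) * (1 + Real.exp R*(R + 7*R^2 + 6*R^3 + R^4)*θ^4/24
    - (θ - Real.exp R*(R + 3*R^2 + R^3)*θ^3/6)^2/2)

noncomputable def DD (R θ : ℝ) : ℝ :=
  Real.exp (-((20/21)^2*(Real.exp R*(R + R^2)*θ^2)/2)) *
    (((Real.exp R)⁻¹)^2 * Qw (Real.exp R*(R + R^2)*θ^2))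

theorem expR_148 {R : ℝ} (hR : 5 ≤ R) : 148 ≤ Real.exp R := by
  have := expR hR
  nlinarith [sq_nonneg (R-5)]

theorem pt_main {R : ℝ} (n : ℕ) (hR : 5 ≤ R) (hn : (n:ℝ) + 1 = R * Real.exp R) (θ : ℝ)
    (hθ : R * |θ| ≤ 0.7) : |FF n R θ - GG R θ| ≤ DD R θ := by
  have hR0 : 0 < R := by linarith
  have hsq : R^2 * θ^2 ≤ 0.49 := by
    rw [← sq_abs θ]
    have : 0 ≤ R * |θ| := by positivity
    nlinarith
  refine main_abs (Real.exp_pos R) (mok hR) (T1 hR0 θ) (T2 hR0 θ) (T3 hR0 θ) (T4 hR0 θ) ?_ ?_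
  · have : (n:ℝ) = R * Real.exp R - 1 := by linarith
    rw [this]; ring
  · have h := mul_le_mul_of_nonneg_right (m4b hR) (sq_nonneg θ)
    have h2 := mul_le_mul_of_nonneg_right hsq (show 0 ≤ R + R^2 by positivity)
    nlinarith

theorem pt_tail {R : ℝ} (hR : 5 ≤ R) (θ : ℝ)
    (hθ : 0.7 ≤ R * |θ|) : |GG R θ| ≤ DD R θ := by
  have hR0 : 0 < R := by linarith
  refine tail_abs (expR_148 hR) (mok hR) ?_
  have hsq : 0.49 ≤ R^2 * θ^2 := by
    rw [← sq_abs θ]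
    nlinarith
  nlinarith [mul_nonneg hR0.le (sq_nonneg θ)]

theorem DD_nonneg {R : ℝ} (hR : 5 ≤ R) (θ : ℝ) : 0 ≤ DD R θ := by
  have hR0 : 0 < R := by linarith
  unfold DD Qw
  positivity

theorem pt {R : ℝ} (n : ℕ) (hR : 5 ≤ R) (hn : (n:ℝ) + 1 = R * Real.exp R) (θ : ℝ) :
    |(Set.Ioc (-Real.pi) Real.pi).indicator (FF n R) θ - GG R θ| ≤
     DD R θ + (Set.Ioc (-Real.pi) Real.pi).indicator (fun _ => ((Real.exp R)⁻¹)^5) θ := by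
  have hR0 : 0 < R := by linarith
  have hp : 0 ≤ ((Real.exp R)⁻¹)^5 := by positivity
  by_cases hm : θ ∈ Set.Ioc (-Real.pi) Real.pi
  · rw [Set.indicator_of_mem hm, Set.indicator_of_mem hm]
    rcases le_total (R*|θ|) 0.7 with h | h
    · have := pt_main n hR hn θ h
      linarith
    · have h1 := pt_tail hR θ h
      have h2 := outer_F n hR h (abs_le.2 ⟨hm.1.le, hm.2⟩)
      have := abs_sub (FF n R θ) (GG R θ)
      linarith
  · rw [Set.indicator_of_notMem hm, Set.indicator_of_notMem hm, zero_sub, abs_neg, add_zero]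
    apply pt_tail hR
    by_contra h
    apply hm
    push Not at h
    have h3 : |θ| < 1 := by
      by_contra h4
      push Not at h4
      nlinarith
    have h4 := abs_lt.1 h3
    have := Real.pi_gt_three
    exact ⟨by linarith [h4.1], by linarith [h4.2]⟩

noncomputable def sg (R : ℝ) : ℝ := Real.sqrt (Real.exp R * (R + R^2))

noncomputable def cc (R : ℝ) : ℝ := (3 * (R + 7*R^2 + 6*R^3 + R^4) * (R+R^2) - 12 * (R+R^2)^2
  + 12 * (R + 3*R^2 + R^3) * (R+R^2) - 5 * (R + 3*R^2 + R^3)^2) / (24 * (R+R^2)^3)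

theorem sg_pos {R : ℝ} (hR : 5 ≤ R) : 0 < sg R := by
  have hR0 : 0 < R := by linarith
  exact Real.sqrt_pos.2 (by positivity)
theorem sg_sq {R : ℝ} (hR : 5 ≤ R) : sg R ^ 2 = Real.exp R * (R + R^2) := by
  have hR0 : 0 < R := by linarith
  exact Real.sq_sqrt (by positivity)

theorem GG_int {R : ℝ} (hR : 5 ≤ R) : MeasureTheory.Integrable (GG R) ∧
    ∫ θ, GG R θ = (sg R)⁻¹ * ((1 + cc R * (Real.exp R)⁻¹) * Real.sqrt (2*Real.pi)) := by
  have hR0 : 0 < R := by linarith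
  have hs := sg_pos hR
  have hs2 := sg_sq hR
  obtain ⟨h1, h2⟩ := gpoly 1 (-(1/(2*sg R^2)))
    (Real.exp R*(R + 7*R^2 + 6*R^3 + R^4)/(24*(sg R^2)^2) + Real.exp R*(R + 3*R^2 + R^3)/(6*(sg R^2)^2))
    (-((Real.exp R*(R + 3*R^2 + R^3))^2/(72*(sg R^2)^3))) 0 0 0
  obtain ⟨k1, k2⟩ := gscale hs h1
  have e : GG R = fun θ => (fun u : ℝ => (1 + (-(1/(2*sg R^2))) * u^2
    + (Real.exp R*(R + 7*R^2 + 6*R^3 + R^4)/(24*(sg R^2)^2) + Real.exp R*(R + 3*R^2 + R^3)/(6*(sg R^2)^2)) * u^4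
    + (-((Real.exp R*(R + 3*R^2 + R^3))^2/(72*(sg R^2)^3))) * u^6 + 0 * u^8 + 0 * u^10 + 0 * u^12)
     * Real.exp (-(u^2/2))) (sg R * θ) := by
    funext θ
    simp only
    have e1 : (sg R * θ)^2/2 = Real.exp R*(R + R^2)*θ^2/2 := by rw [mul_pow, hs2]
    rw [e1, GG, mul_comm]
    congr 1
    have hs0 := hs.ne'
    field_simp
    ring
  rw [e]
  refine ⟨k1, k2.trans ?_⟩
  rw [h2]
  congr 2
  rw [hs2, cc]
  have hN := (Real.exp_pos R).ne'
  have : R + R^2 ≠ 0 := by positivity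
  generalize Real.exp R = N at *
  generalize R + 3*R^2 + R^3 = m3 at *
  generalize R + 7*R^2 + 6*R^3 + R^4 = m4 at *
  generalize R + R^2 = m2 at *
  field_simp
  ring

theorem DD_int {R : ℝ} (hR : 5 ≤ R) : MeasureTheory.Integrable (DD R) ∧
    ∫ θ, DD R θ ≤ ((Real.exp R)⁻¹)^2 * ((sg R)⁻¹ * (6.9 * Real.sqrt (2*Real.pi))) := by
  have hs := sg_pos hR
  have hs2 := sg_sq hR
  obtain ⟨h1, h2⟩ := QQ_int
  obtain ⟨k1, k2⟩ := gscale hs h1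
  have e : DD R = fun θ => ((Real.exp R)⁻¹)^2 * ((fun t : ℝ => QQ t * Real.exp (-((20/21)^2 * t^2/2))) (sg R * θ)) := by
    funext θ
    simp only
    have e1 : (sg R * θ)^2 = Real.exp R*(R + R^2)*θ^2 := by rw [mul_pow, hs2]
    have e2 : QQ (sg R * θ) = Qw ((sg R * θ)^2) := by unfold QQ Qw; ring
    rw [e2, e1, DD]
    ring
  rw [e]
  refine ⟨k1.const_mul _, ?_⟩
  rw [MeasureTheory.integral_const_mul, k2]
  apply mul_le_mul_of_nonneg_left _ (by positivity)
  exact mul_le_mul_of_nonneg_left h2 (by positivity)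

theorem FF_cont (n : ℕ) (R : ℝ) : Continuous (FF n R) := by
  unfold FF rePsi imPsi
  fun_prop

theorem int_close {R : ℝ} (n : ℕ) (hR : 5 ≤ R) (hn : (n:ℝ) + 1 = R * Real.exp R) :
    |(∫ θ in (-Real.pi)..Real.pi, FF n R θ)
       - (sg R)⁻¹ * ((1 + cc R * (Real.exp R)⁻¹) * Real.sqrt (2*Real.pi))| ≤
     ((Real.exp R)⁻¹)^2 * ((sg R)⁻¹ * (6.9 * Real.sqrt (2*Real.pi))) + 2*Real.pi*((Real.exp R)⁻¹)^5 := by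
  have hpi := Real.pi_pos
  have hF : MeasureTheory.Integrable ((Set.Ioc (-Real.pi) Real.pi).indicator (FF n R)) := by
    rw [MeasureTheory.integrable_indicator_iff measurableSet_Ioc]
    exact ((FF_cont n R).integrableOn_Icc).mono_set Set.Ioc_subset_Icc_self
  have hC : MeasureTheory.Integrable ((Set.Ioc (-Real.pi) Real.pi).indicator
      (fun _ => ((Real.exp R)⁻¹)^5)) := by
    rw [MeasureTheory.integrable_indicator_iff measurableSet_Ioc]
    exact (continuous_const.integrableOn_Icc).mono_set Set.Ioc_subset_Icc_self
  obtain ⟨g1, g2⟩ := GG_int hR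
  obtain ⟨d1, d2⟩ := DD_int hR
  have e1 : ∫ θ in (-Real.pi)..Real.pi, FF n R θ = ∫ θ, (Set.Ioc (-Real.pi) Real.pi).indicator (FF n R) θ := by
    rw [intervalIntegral.integral_of_le (by linarith), MeasureTheory.integral_indicator measurableSet_Ioc]
  have e2 : ∫ θ, (Set.Ioc (-Real.pi) Real.pi).indicator (fun _ => ((Real.exp R)⁻¹)^5) θ
      = 2*Real.pi*((Real.exp R)⁻¹)^5 := by
    rw [MeasureTheory.integral_indicator measurableSet_Ioc, ← intervalIntegral.integral_of_le (by linarith),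
      intervalIntegral.integral_const, smul_eq_mul]
    ring
  rw [e1, ← g2, ← MeasureTheory.integral_sub hF g1]
  refine (MeasureTheory.abs_integral_le_integral_abs).trans ?_
  refine (MeasureTheory.integral_mono (hF.sub g1).abs (d1.add hC) (fun θ => pt n hR hn θ)).trans ?_
  rw [← e2]
  have := MeasureTheory.integral_add d1 hC
  refine (this.trans_le ?_)
  linarith

theorem cc_bounds {R : ℝ} (hR : 5 ≤ R) : cc R ≤ 0 ∧ -(1/12) + 0.28/R ≤ cc R := by
  unfold cc
  obtain ⟨r, rfl⟩ : ∃ r, R = 5 + r := ⟨R - 5, by ring⟩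
  have hr : 0 ≤ r := by linarith
  constructor
  · apply div_nonpos_of_nonpos_of_nonneg
    · rw [← neg_nonneg]
      ring_nf
      positivity
    · positivity
  · rw [le_div_iff₀ (by positivity)]
    have e : (-(1/12) + 0.28/(5+r)) * (24 * ((5+r) + (5+r)^2)^3)
      = (-2 * (5+r) + 6.72) * ((5+r)^2 * (1 + (5+r))^3) := by
      have : (5 + r) ≠ 0 := by positivity
      field_simp
      ring
    rw [e, ← sub_nonneg]
    ring_nf
    positivity


theorem alg_final {x c M s q R : ℝ} (hM : 0 < M) (hs : 0 < s) (hq : 0 < q) (hR : 5 ≤ R)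
    (hMs : M * s ≤ 1) (hM1 : 148 * M ≤ 1) (hMR : 25 * R * M ≤ 1) (hq3 : q ≤ 3)
    (hc0 : c ≤ 0) (hc1 : -(1/12) + 0.28/R ≤ c)
    (h : |s⁻¹ * (x * q) - s⁻¹ * ((1 + c * M) * q)| ≤ M^2 * (s⁻¹ * (6.9 * q)) + q^2 * M^5) :
    |x - 1| ≤ M / 11 := by
  have h1 : |s⁻¹ * (x * q) - s⁻¹ * ((1 + c * M) * q)| = (s⁻¹ * q) * |x - 1 - c * M| := by
    rw [← abs_of_pos (show 0 < s⁻¹ * q by positivity), ← abs_mul]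
    congr 1; ring
  have h2 : M^2 * (s⁻¹ * (6.9 * q)) + q^2 * M^5 = (s⁻¹ * q) * (6.9 * M^2 + q * s * M^5) := by
    field_simp
  rw [h1, h2] at h
  have h3 := le_of_mul_le_mul_left h (by positivity)
  have h4 : q * s * M^5 ≤ 0.1 * M^2 := by
    have e : q * s * M^5 = (q * (M * s) * M^2) * M^2 := by ring
    rw [e]
    have a1 : q * (M * s) ≤ 3 * 1 := by gcongr
    have a2 : M^2 ≤ 1/148 * (1/148) := by nlinarith
    have a3 : q * (M * s) * M^2 ≤ 3 * 1 * (1/148 * (1/148)) := by gcongr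
    have a4 : q * (M * s) * M^2 ≤ 0.1 := a3.trans (by norm_num)
    gcongr
  have h5 : 7 * M ≤ 0.28 / R := by
    rw [le_div_iff₀ (by linarith)]
    nlinarith
  have h6 : -(1/12) + 7 * M ≤ c := by linarith
  have h7 : M * (-(1/12) + 7 * M) ≤ M * c := by gcongr
  have h8 : M * c ≤ 0 := mul_nonpos_of_nonneg_of_nonpos hM.le hc0
  have h9 : M * (148 * M) ≤ M * 1 := by gcongr
  rw [abs_le] at h3 ⊢
  constructor
  · nlinarith [h3.1]
  · nlinarith [h3.2]

theorem analytic_case (n : ℕ) (hn : 742 ≤ n) :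
    |(Bell n : ℝ) / E n - 1| ≤ Real.exp (-(lambertW (n + 1))) / 11 := by
  have hx : (0:ℝ) < n + 1 := by positivity
  have hR0 := lambertW_pos hx
  have hW := lambertW_eq hx
  have hn' : (742:ℝ) ≤ n := by exact_mod_cast hn
  have hR : 5 ≤ lambertW (n+1) := by
    apply le_of_xexp hR0.le
    rw [hW]
    have e5 : Real.exp 5 = Real.exp 1 ^ 5 := by rw [← Real.exp_nat_mul]; norm_num
    have : Real.exp 1 ^ 5 ≤ 2.7182818286 ^ 5 := by
      gcongr; exact Real.exp_one_lt_d9.le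
    have : Real.exp 5 ≤ 148.6 := by rw [e5]; exact this.trans (by norm_num)
    linarith
  unfold E
  set R := lambertW (n+1) with hRdef
  have hI := int_close n hR hW.symm
  rw [bell_integral n hR0] at hI
  have hs := sg_pos hR
  have hss := sg_sq hR
  have hN := Real.exp_pos R
  have hexp := expR hR
  have hpi := Real.pi_pos
  have hq : 0 < √(2 * Real.pi) := by positivity
  have hqq : √(2 * Real.pi) ^ 2 = 2 * Real.pi := Real.sq_sqrt (by positivity)
  have hsplit : √(2 * Real.pi * (n+1) * (R+1)) = √(2*Real.pi) * sg R := by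
    rw [mul_assoc (2*Real.pi), Real.sqrt_mul (by positivity), sg, ← hW]
    congr 2; ring
  rw [hsplit, Real.exp_neg]
  obtain ⟨hc0, hc1⟩ := cc_bounds hR
  have hsN : sg R ≤ Real.exp R := by
    have hRN : R + R^2 ≤ Real.exp R := by nlinarith [sq_nonneg (R-5)]
    have : Real.exp R * (R + R^2) ≤ Real.exp R * Real.exp R := by gcongr
    exact (pow_le_pow_iff_left₀ hs.le hN.le two_ne_zero).1 (by rw [hss]; linarith)
  refine alg_final (s := sg R) (q := √(2*Real.pi)) (by positivity) hs hq hR ?_ ?_ ?_ ?_ hc0 hc1 ?_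
  · rw [inv_mul_le_iff₀ hN]; linarith
  · rw [mul_inv_le_iff₀ hN]; linarith [expR_148 hR]
  · rw [mul_inv_le_iff₀ hN]; nlinarith [sq_nonneg (R-5)]
  · rw [Real.sqrt_le_left (by norm_num)]; linarith [Real.pi_lt_d2]
  · rw [hqq]
    convert hI using 3
    have hf : (n.factorial : ℝ) ≠ 0 := by positivity
    field_simp
    rw [hqq]
    ring

theorem stmt_1 (n : ℕ) (hn : 11 ≤ n) :
    |(Bell n : ℝ) / E n - 1| ≤ Real.exp (-(lambertW (n + 1))) / 11 ∧
      Real.exp (-(lambertW (n + 1))) / 11 ≤ Real.log n / (11 * n) := by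
  refine ⟨?_, second_part n hn⟩
  rcases Nat.lt_or_ge n 742 with h | h
  · exact finite_case n hn (by omega)
  · exact analytic_case n h
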